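/- arXiv:2507.02043 — 2 statements merged into one kernel-verified Lean document; each statement's English description precedes it below -/
import Mathlib

section
/- Let ρ be a density matrix on n qubits with von Neumann entropy S(ρ), and let D_p^{n_c} = N_p^{⊗(n−n_c)} ⊗ id^{⊗ n_c} be the channel applying single-qubit depolarizing noise with parameter p ∈ [0,1] to the first n−n_c qubits and the identity to the rest. Then S(D_p^{n_c}(ρ)) ≥ (1−p)·S(ρ) + p·(n−n_c)·log 2. -/
open Matrix MeasureTheory
open scoped ComplexOrder

/-- von Neumann entropy of a (Hermitian) matrix, via its eigenvalues.
Junk value `0` if the matrix is not Hermitian. -/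
noncomputable def vnEntropy {ι : Type*} [Fintype ι] [DecidableEq ι]
    (M : Matrix ι ι ℂ) : ℝ :=
  if h : M.IsHermitian then -∑ i, h.eigenvalues i * Real.log (h.eigenvalues i) else 0

/-- The channel that fully depolarizes (replaces by `I/2`) the system qubits in `S ⊆ Fin k`,
acting as the identity on the remaining system qubits and on the `c` ancilla qubits. -/
noncomputable def depolSet {k c : ℕ} (S : Finset (Fin k))
    (ρ : Matrix ((Fin k → Fin 2) × (Fin c → Fin 2)) ((Fin k → Fin 2) × (Fin c → Fin 2)) ℂ) :
    Matrix ((Fin k → Fin 2) × (Fin c → Fin 2)) ((Fin k → Fin 2) × (Fin c → Fin 2)) ℂ :=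
  Matrix.of fun x y =>
    if ∀ i ∈ S, x.1 i = y.1 i then
      ((2 : ℂ) ^ S.card)⁻¹ * (((2 : ℂ) ^ (k - S.card))⁻¹ *
        ∑ z : Fin k → Fin 2, ρ (S.piecewise z x.1, x.2) (S.piecewise z y.1, y.2))
    else 0

/-- The channel `N_p^{⊗k} ⊗ id` : single-qubit depolarizing noise with parameter `p`
on each of the first `k` qubits, identity on the `c` ancilla qubits.  (Expanding
`N_p = (1-p)·id + p·(full single-qubit depolarization)` over subsets.) -/
noncomputable def depolChannel {k c : ℕ} (p : ℝ)
    (ρ : Matrix ((Fin k → Fin 2) × (Fin c → Fin 2)) ((Fin k → Fin 2) × (Fin c → Fin 2)) ℂ) :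
    Matrix ((Fin k → Fin 2) × (Fin c → Fin 2)) ((Fin k → Fin 2) × (Fin c → Fin 2)) ℂ :=
  ∑ S : Finset (Fin k), (((p : ℂ)) ^ S.card * ((1 - p : ℝ) : ℂ) ^ (k - S.card)) • depolSet S ρ

section SpectralCalculus

variable {ι : Type*} [Fintype ι] [DecidableEq ι]

/-- The matrix `U x V†`, i.e. the matrix with entries `x` with respect to the orthonormal bases
given by the columns of the unitaries `U` and `V`. -/
noncomputable def basisMat (U V : unitaryGroup ι ℂ) (x : Matrix ι ι ℂ) : Matrix ι ι ℂ :=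
  (U : Matrix ι ι ℂ) * x * star (V : Matrix ι ι ℂ)

/-- The Hermitian matrix `U diag(f) U†`. -/
noncomputable def conjDiag (U : unitaryGroup ι ℂ) (f : ι → ℝ) : Matrix ι ι ℂ :=
  basisMat U U (diagonal fun i => (f i : ℂ))

/-- The overlap matrix `U† V` of two orthonormal bases. -/
noncomputable def overlap (U V : unitaryGroup ι ℂ) : Matrix ι ι ℂ :=
  star (U : Matrix ι ι ℂ) * (V : Matrix ι ι ℂ)

lemma unitaryGroup_star_mul_mul (U : unitaryGroup ι ℂ) (A : Matrix ι ι ℂ) :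
    star (U : Matrix ι ι ℂ) * ((U : Matrix ι ι ℂ) * A) = A := by
  rw [← mul_assoc, Unitary.coe_star_mul_self, one_mul]

lemma unitaryGroup_mul_star_mul (U : unitaryGroup ι ℂ) (A : Matrix ι ι ℂ) :
    (U : Matrix ι ι ℂ) * (star (U : Matrix ι ι ℂ) * A) = A := by
  rw [← mul_assoc, Unitary.mul_star_self_of_mem U.2, one_mul]

lemma basisMat_mul_basisMat (U V W : unitaryGroup ι ℂ) (x y : Matrix ι ι ℂ) :
    basisMat U V x * basisMat V W y = basisMat U W (x * y) := by
  simp only [basisMat, mul_assoc, unitaryGroup_star_mul_mul]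

lemma basisMat_conjTranspose (U V : unitaryGroup ι ℂ) (x : Matrix ι ι ℂ) :
    (basisMat U V x)ᴴ = basisMat V U xᴴ := by
  simp [basisMat, mul_assoc, star_eq_conjTranspose]

lemma basisMat_eq_self (U V : unitaryGroup ι ℂ) (X : Matrix ι ι ℂ) :
    basisMat U V (star (U : Matrix ι ι ℂ) * X * (V : Matrix ι ι ℂ)) = X := by
  simp [basisMat, mul_assoc, unitaryGroup_mul_star_mul]

lemma trace_basisMat (U : unitaryGroup ι ℂ) (x : Matrix ι ι ℂ) :
    (basisMat U U x).trace = x.trace := by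
  rw [basisMat, trace_mul_cycle, Unitary.coe_star_mul_self, one_mul]

lemma conjDiag_one (U : unitaryGroup ι ℂ) : conjDiag U (fun _ => 1) = 1 := by
  simp [conjDiag, basisMat]

lemma conjDiag_isHermitian (U : unitaryGroup ι ℂ) (f : ι → ℝ) : (conjDiag U f).IsHermitian := by
  rw [IsHermitian, conjDiag, basisMat_conjTranspose, diagonal_conjTranspose]
  congr 2
  ext i
  simp

lemma conjDiag_eigenvalues {A : Matrix ι ι ℂ} (hA : A.IsHermitian) :
    conjDiag hA.eigenvectorUnitary hA.eigenvalues = A := by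
  conv_rhs => rw [hA.spectral_theorem]
  rfl

lemma vnEntropy_conjDiag (U : unitaryGroup ι ℂ) (f : ι → ℝ) :
    vnEntropy (conjDiag U f) = ∑ i, Real.negMulLog (f i) := by
  have hH := conjDiag_isHermitian U f
  rw [vnEntropy, dif_pos hH]
  have h1 : (conjDiag U f).charpoly.roots =
      Multiset.map (fun i => (f i : ℂ)) Finset.univ.val := by
    have : (conjDiag U f).charpoly = ∏ i, (Polynomial.X - Polynomial.C (f i : ℂ)) := by
      rw [conjDiag, basisMat, charpoly_mul_comm, ← mul_assoc, Unitary.coe_star_mul_self, one_mul,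
        charpoly_diagonal]
    rw [this, Polynomial.roots_prod]
    · simp
    · simp [Finset.prod_ne_zero_iff, Polynomial.X_sub_C_ne_zero]
  have h2 := congrArg (fun s => (s.map (fun z : ℂ => Real.negMulLog z.re)).sum)
    (hH.roots_charpoly_eq_eigenvalues.symm.trans h1)
  simpa [Real.negMulLog, Finset.sum_neg_distrib] using h2

lemma trace_conjTranspose_basisMat_mul (U V : unitaryGroup ι ℂ) (x y : Matrix ι ι ℂ) :
    ((basisMat U V x)ᴴ * basisMat U V y).trace = ∑ i, ∑ j, star (x i j) * y i j := by
  rw [basisMat_conjTranspose, basisMat_mul_basisMat, trace_basisMat, trace, Finset.sum_comm]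
  simp [mul_apply]

lemma conjDiag_eq_basisMat_left (U V : unitaryGroup ι ℂ) (f : ι → ℝ) :
    conjDiag U f = basisMat U V (of fun i j => (f i : ℂ) * overlap U V i j) := by
  have : (of fun i j => (f i : ℂ) * overlap U V i j)
      = diagonal (fun i => (f i : ℂ)) * overlap U V := by
    ext i j; simp
  rw [this, conjDiag, basisMat, basisMat, overlap]
  simp [mul_assoc]

lemma conjDiag_eq_basisMat_right (U V : unitaryGroup ι ℂ) (f : ι → ℝ) :
    conjDiag V f = basisMat U V (of fun i j => (f j : ℂ) * overlap U V i j) := by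
  have : (of fun i j => (f j : ℂ) * overlap U V i j)
      = overlap U V * diagonal (fun i => (f i : ℂ)) := by
    ext i j; simp [mul_comm]
  rw [this, conjDiag, basisMat, basisMat, overlap]
  simp [mul_assoc, unitaryGroup_mul_star_mul]

lemma trace_conjDiag_mul_conjDiag (U V : unitaryGroup ι ℂ) (a b : ι → ℝ) :
    (conjDiag U a * conjDiag V b).trace.re
      = ∑ i, ∑ j, Complex.normSq (overlap U V i j) * (a i * b j) := by
  nth_rw 1 [← (conjDiag_isHermitian U a).eq]
  rw [conjDiag_eq_basisMat_left U V a, conjDiag_eq_basisMat_right U V b,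
    trace_conjTranspose_basisMat_mul, Complex.re_sum]
  refine Finset.sum_congr rfl fun i _ => ?_
  rw [Complex.re_sum]
  refine Finset.sum_congr rfl fun j _ => ?_
  simp [Complex.normSq_apply]
  ring

lemma trace_conjDiag (U : unitaryGroup ι ℂ) (a : ι → ℝ) :
    (conjDiag U a).trace.re = ∑ i, a i := by
  rw [conjDiag, trace_basisMat]
  simp [trace]

end SpectralCalculus

section RelativeEntropy

variable {ι : Type*} [Fintype ι] [DecidableEq ι]

/-- The integrand of the integral representation of the relative entropy. -/
noncomputable def chiForm (U V : unitaryGroup ι ℂ) (p q : ι → ℝ) (t : ℝ) : ℝ :=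
  ∑ i, ∑ j, Complex.normSq (overlap U V i j) * ((p i - q j) ^ 2 / (q j + t * p i))

lemma conjDiag_sub_conjDiag (U V : unitaryGroup ι ℂ) (p q : ι → ℝ) :
    conjDiag U p - conjDiag V q
      = basisMat U V (of fun i j => ((p i - q j : ℝ) : ℂ) * overlap U V i j) := by
  rw [conjDiag_eq_basisMat_left U V p, conjDiag_eq_basisMat_right U V q, basisMat, basisMat,
    basisMat, ← sub_mul, ← mul_sub]
  congr 2
  ext i j
  simp [sub_mul]

lemma basisMat_mul_conjDiag_add (U V : unitaryGroup ι ℂ) (p q : ι → ℝ) (t : ℝ)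
    (x : Matrix ι ι ℂ) :
    basisMat U V x * conjDiag V q + (t : ℂ) • (conjDiag U p * basisMat U V x)
      = basisMat U V (of fun i j => ((q j + t * p i : ℝ) : ℂ) * x i j) := by
  rw [conjDiag, conjDiag, basisMat_mul_basisMat, basisMat_mul_basisMat]
  rw [basisMat, basisMat, basisMat, ← smul_mul_assoc, ← mul_smul_comm, ← add_mul, ← mul_add]
  congr 2
  ext i j
  simp
  ring

lemma exists_chiForm_eq (U V : unitaryGroup ι ℂ) {p q : ι → ℝ} (hp : ∀ i, 0 < p i)
    (hq : ∀ i, 0 < q i) {t : ℝ} (ht : 0 ≤ t) :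
    ∃ Y, Y * conjDiag V q + (t : ℂ) • (conjDiag U p * Y) = conjDiag U p - conjDiag V q ∧
      chiForm U V p q t = ((conjDiag U p - conjDiag V q)ᴴ * Y).trace.re := by
  have hpos : ∀ i j, 0 < q j + t * p i := fun i j =>
    add_pos_of_pos_of_nonneg (hq j) (mul_nonneg ht (hp i).le)
  refine ⟨basisMat U V (of fun i j =>
    (((p i - q j) / (q j + t * p i) : ℝ) : ℂ) * overlap U V i j), ?_, ?_⟩
  · rw [basisMat_mul_conjDiag_add, conjDiag_sub_conjDiag]
    congr 1
    ext i j
    rw [of_apply, of_apply, of_apply, ← mul_assoc, ← Complex.ofReal_mul,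
      mul_div_cancel₀ _ (hpos i j).ne']
  · rw [conjDiag_sub_conjDiag, trace_conjTranspose_basisMat_mul, Complex.re_sum, chiForm]
    refine Finset.sum_congr rfl fun i _ => ?_
    rw [Complex.re_sum]
    refine Finset.sum_congr rfl fun j _ => ?_
    simp only [of_apply, Complex.star_def, map_mul, Complex.conj_ofReal, Complex.mul_re,
      Complex.mul_im, Complex.conj_re, Complex.conj_im, Complex.ofReal_re, Complex.ofReal_im,
      Complex.normSq_apply]
    ring

lemma le_chiForm (U V : unitaryGroup ι ℂ) {p q : ι → ℝ} (hp : ∀ i, 0 < p i)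
    (hq : ∀ i, 0 < q i) {t : ℝ} (ht : 0 ≤ t) (X : Matrix ι ι ℂ) :
    2 * ((conjDiag U p - conjDiag V q)ᴴ * X).trace.re
      - (Xᴴ * (X * conjDiag V q + (t : ℂ) • (conjDiag U p * X))).trace.re
      ≤ chiForm U V p q t := by
  obtain ⟨x, rfl⟩ : ∃ x, X = basisMat U V x := ⟨_, (basisMat_eq_self U V X).symm⟩
  rw [basisMat_mul_conjDiag_add, conjDiag_sub_conjDiag, trace_conjTranspose_basisMat_mul,
    trace_conjTranspose_basisMat_mul, Complex.re_sum, Complex.re_sum, chiForm, Finset.mul_sum,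
    ← Finset.sum_sub_distrib]
  refine Finset.sum_le_sum fun i _ => ?_
  rw [Complex.re_sum, Complex.re_sum, Finset.mul_sum, ← Finset.sum_sub_distrib]
  refine Finset.sum_le_sum fun j _ => ?_
  have hpos : 0 < q j + t * p i := add_pos_of_pos_of_nonneg (hq j) (mul_nonneg ht (hp i).le)
  simp only [of_apply, Complex.star_def, map_mul, Complex.conj_ofReal, Complex.mul_re,
      Complex.mul_im, Complex.conj_re, Complex.conj_im, Complex.ofReal_re, Complex.ofReal_im,
      Complex.normSq_apply]
  generalize q j + t * p i = s at *
  generalize p i - q j = r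
  generalize (overlap U V i j).re = a
  generalize (overlap U V i j).im = b
  generalize (x i j).re = c
  generalize (x i j).im = d
  rw [← mul_div_assoc, le_div_iff₀ hpos]
  nlinarith [sq_nonneg (r * a - s * c), sq_nonneg (r * b - s * d)]

lemma hasDerivAt_relEntropy_primitive {p q t : ℝ} (hp : 0 < p) (hq : 0 < q) (ht : 0 ≤ t) :
    HasDerivAt (fun t => p * (Real.log (q + t * p) - Real.log (1 + t)) - (q - p) / (1 + t))
      ((p - q) ^ 2 / (q + t * p) / (1 + t) ^ 2) t := by
  have h1 : 0 < q + t * p := add_pos_of_pos_of_nonneg hq (mul_nonneg ht hp.le)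
  have h2 : 0 < 1 + t := by linarith
  have d1 : HasDerivAt (fun t : ℝ => q + t * p) p t := by
    simpa using ((hasDerivAt_id t).mul_const p).const_add q
  have d2 : HasDerivAt (fun t : ℝ => 1 + t) 1 t := (hasDerivAt_id t).const_add 1
  refine ((((d1.log h1.ne').sub (d2.log h2.ne')).const_mul p).sub
    ((hasDerivAt_const t (q - p)).div d2 h2.ne')).congr_deriv ?_
  field_simp
  ring

lemma tendsto_relEntropy_primitive {p q : ℝ} (hp : 0 < p) (hq : 0 < q) :
    Filter.Tendsto
      (fun t => p * (Real.log (q + t * p) - Real.log (1 + t)) - (q - p) / (1 + t))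
      Filter.atTop (nhds (p * Real.log p)) := by
  have hinf : Filter.Tendsto (fun t : ℝ => 1 + t) Filter.atTop Filter.atTop :=
    Filter.tendsto_atTop_add_const_left _ _ Filter.tendsto_id
  have h0 : Filter.Tendsto (fun t : ℝ => (q - p) / (1 + t)) Filter.atTop (nhds 0) :=
    hinf.const_div_atTop _
  have h1 : Filter.Tendsto (fun t : ℝ => p + (q - p) / (1 + t)) Filter.atTop (nhds p) := by
    simpa using h0.const_add p
  have h2 := ((h1.log hp.ne').const_mul p).sub h0
  rw [sub_zero] at h2
  refine h2.congr' ?_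
  filter_upwards [Filter.eventually_ge_atTop 0] with t ht
  have h3 : 0 < q + t * p := add_pos_of_pos_of_nonneg hq (mul_nonneg ht hp.le)
  have h4 : 0 < 1 + t := by linarith
  have h5 : p + (q - p) / (1 + t) = (q + t * p) / (1 + t) := by
    field_simp
    ring
  rw [← Real.log_div h3.ne' h4.ne', h5]

lemma integral_relEntropy_kernel {p q : ℝ} (hp : 0 < p) (hq : 0 < q) :
    IntegrableOn (fun t => (p - q) ^ 2 / (q + t * p) / (1 + t) ^ 2) (Set.Ioi 0) ∧
    ∫ t in Set.Ioi (0 : ℝ), (p - q) ^ 2 / (q + t * p) / (1 + t) ^ 2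
      = p * Real.log p - p * Real.log q - p + q := by
  have hd := fun t (ht : t ∈ Set.Ici (0 : ℝ)) => hasDerivAt_relEntropy_primitive hp hq ht
  have hn : ∀ t ∈ Set.Ioi (0 : ℝ), 0 ≤ (p - q) ^ 2 / (q + t * p) / (1 + t) ^ 2 := by
    intro t ht
    have : 0 < t := ht
    positivity
  refine ⟨integrableOn_Ioi_deriv_of_nonneg' hd hn (tendsto_relEntropy_primitive hp hq), ?_⟩
  rw [integral_Ioi_of_hasDerivAt_of_nonneg' hd hn (tendsto_relEntropy_primitive hp hq)]
  simp
  ring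

/-- The matrix logarithm of a Hermitian matrix, with junk value `0` otherwise. -/
noncomputable def matLog (A : Matrix ι ι ℂ) : Matrix ι ι ℂ :=
  if h : A.IsHermitian then
    conjDiag h.eigenvectorUnitary (fun i => Real.log (h.eigenvalues i)) else 0

/-- Umegaki relative entropy `Tr A (log A - log B)`, corrected by `Tr (B - A)`. -/
noncomputable def relEntropy (A B : Matrix ι ι ℂ) : ℝ :=
  -vnEntropy A - (A * matLog B).trace.re - A.trace.re + B.trace.re

lemma relEntropy_eq_sum {A B : Matrix ι ι ℂ} (hA : A.IsHermitian) (hB : B.IsHermitian) :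
    relEntropy A B = ∑ i, ∑ j,
      Complex.normSq (overlap hA.eigenvectorUnitary hB.eigenvectorUnitary i j) *
        (hA.eigenvalues i * Real.log (hA.eigenvalues i)
          - hA.eigenvalues i * Real.log (hB.eigenvalues j)
          - hA.eigenvalues i + hB.eigenvalues j) := by
  set U := hA.eigenvectorUnitary
  set V := hB.eigenvectorUnitary
  set p := hA.eigenvalues
  set q := hB.eigenvalues
  have e1 : -vnEntropy A = ∑ i, ∑ j, Complex.normSq (overlap U V i j) *
      ((p i * Real.log (p i)) * 1) := by
    rw [← trace_conjDiag_mul_conjDiag, conjDiag_one, mul_one, trace_conjDiag, vnEntropy,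
      dif_pos hA, neg_neg]
  have e2 : (A * matLog B).trace.re = ∑ i, ∑ j, Complex.normSq (overlap U V i j) *
      (p i * Real.log (q j)) := by
    rw [← trace_conjDiag_mul_conjDiag U V p (fun j => Real.log (q j)), matLog, dif_pos hB,
      conjDiag_eigenvalues hA]
  have e3 : A.trace.re = ∑ i, ∑ j, Complex.normSq (overlap U V i j) * (p i * 1) := by
    rw [← trace_conjDiag_mul_conjDiag U V p (fun _ => 1), conjDiag_one, mul_one,
      conjDiag_eigenvalues hA]
  have e4 : B.trace.re = ∑ i, ∑ j, Complex.normSq (overlap U V i j) * (1 * q j) := by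
    rw [← trace_conjDiag_mul_conjDiag U V (fun _ => 1) q, conjDiag_one, one_mul,
      conjDiag_eigenvalues hB]
  rw [relEntropy, e1, e2, e3, e4]
  simp only [← Finset.sum_sub_distrib, ← Finset.sum_add_distrib]
  refine Finset.sum_congr rfl fun i _ => Finset.sum_congr rfl fun j _ => ?_
  ring

lemma integral_chiForm (U V : unitaryGroup ι ℂ) {p q : ι → ℝ} (hp : ∀ i, 0 < p i)
    (hq : ∀ i, 0 < q i) :
    IntegrableOn (fun t => chiForm U V p q t / (1 + t) ^ 2) (Set.Ioi 0) ∧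
    ∫ t in Set.Ioi (0 : ℝ), chiForm U V p q t / (1 + t) ^ 2
      = ∑ i, ∑ j, Complex.normSq (overlap U V i j) *
        (p i * Real.log (p i) - p i * Real.log (q j) - p i + q j) := by
  have h : (fun t => chiForm U V p q t / (1 + t) ^ 2) = fun t => ∑ i, ∑ j,
      Complex.normSq (overlap U V i j) * ((p i - q j) ^ 2 / (q j + t * p i) / (1 + t) ^ 2) := by
    ext t
    simp only [chiForm, Finset.sum_div, mul_div_assoc]
  have hint : ∀ i j, IntegrableOn (fun t => Complex.normSq (overlap U V i j) *
      ((p i - q j) ^ 2 / (q j + t * p i) / (1 + t) ^ 2)) (Set.Ioi 0) := fun i j =>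
    (integral_relEntropy_kernel (hp i) (hq j)).1.const_mul _
  rw [h]
  refine ⟨integrable_finsetSum _ fun i _ => integrable_finsetSum _ fun j _ => hint i j, ?_⟩
  rw [integral_finsetSum _ fun i _ => integrable_finsetSum _ fun j _ => hint i j]
  refine Finset.sum_congr rfl fun i _ => ?_
  rw [integral_finsetSum _ fun j _ => hint i j]
  refine Finset.sum_congr rfl fun j _ => ?_
  rw [integral_const_mul, (integral_relEntropy_kernel (hp i) (hq j)).2]

/-- **Klein inequality**. -/
lemma relEntropy_nonneg {A B : Matrix ι ι ℂ} (hA : A.PosDef) (hB : B.PosDef) :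
    0 ≤ relEntropy A B := by
  rw [relEntropy_eq_sum hA.1 hB.1]
  refine Finset.sum_nonneg fun i _ => Finset.sum_nonneg fun j _ =>
    mul_nonneg (Complex.normSq_nonneg _) ?_
  rw [← (integral_relEntropy_kernel (hA.eigenvalues_pos i) (hB.eigenvalues_pos j)).2]
  refine setIntegral_nonneg measurableSet_Ioi fun t ht => ?_
  have h1 := hA.eigenvalues_pos i
  have h2 := hB.eigenvalues_pos j
  have h3 : 0 < t := ht
  positivity

lemma trace_mul_matLog_self {A : Matrix ι ι ℂ} (hA : A.IsHermitian) :
    (A * matLog A).trace.re = -vnEntropy A := by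
  rw [matLog, dif_pos hA]
  nth_rw 1 [← conjDiag_eigenvalues hA]
  rw [conjDiag, conjDiag, basisMat_mul_basisMat, trace_basisMat, vnEntropy, dif_pos hA,
    diagonal_mul_diagonal, trace_diagonal]
  simp [Complex.mul_re]

/-- Concavity of the von Neumann entropy on positive definite matrices. -/
lemma vnEntropy_concave {A B : Matrix ι ι ℂ} (hA : A.PosDef) (hB : B.PosDef) {p : ℝ}
    (hp0 : 0 ≤ p) (hp1 : p ≤ 1)
    (hC : (((1 - p : ℝ) : ℂ) • A + (p : ℂ) • B).PosDef) :
    (1 - p) * vnEntropy A + p * vnEntropy B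
      ≤ vnEntropy (((1 - p : ℝ) : ℂ) • A + (p : ℂ) • B) := by
  set C := ((1 - p : ℝ) : ℂ) • A + (p : ℂ) • B with hCdef
  have h1 := mul_nonneg (sub_nonneg.2 hp1) (relEntropy_nonneg hA hC)
  have h2 := mul_nonneg hp0 (relEntropy_nonneg hB hC)
  have h3 : (C * matLog C).trace.re
      = (1 - p) * (A * matLog C).trace.re + p * (B * matLog C).trace.re := by
    nth_rw 1 [hCdef]
    simp only [add_mul, smul_mul_assoc, trace_add, trace_smul, smul_eq_mul, Complex.add_re,
      Complex.re_ofReal_mul]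
  have h4 : C.trace.re = (1 - p) * A.trace.re + p * B.trace.re := by
    rw [hCdef]
    simp only [trace_add, trace_smul, smul_eq_mul, Complex.add_re, Complex.re_ofReal_mul]
  rw [trace_mul_matLog_self hC.1] at h3
  rw [relEntropy] at h1 h2
  rw [h4] at h1 h2
  linarith

end RelativeEntropy

section ConditionalExpectation

variable {ι : Type*} [Fintype ι] [DecidableEq ι]

/-- Trace-preserving conditional expectations onto unital `*`-subalgebras of a matrix algebra. -/
structure IsCondExp (E : Module.End ℂ (Matrix ι ι ℂ)) : Prop where
  trace_map_mul : ∀ A B, (E A * B).trace = (A * E B).trace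
  map_mul_map : ∀ A B, E (A * E B) = E A * E B
  map_map_mul : ∀ A B, E (E A * B) = E A * E B
  map_one : E 1 = 1
  map_conjTranspose : ∀ A, E Aᴴ = (E A)ᴴ
  posDef : ∀ A, A.PosDef → (E A).PosDef

namespace IsCondExp

variable {E F : Module.End ℂ (Matrix ι ι ℂ)}

lemma map_map (hE : IsCondExp E) (A : Matrix ι ι ℂ) : E (E A) = E A := by
  simpa [hE.map_one] using hE.map_mul_map 1 A

lemma trace_map (hE : IsCondExp E) (A : Matrix ι ι ℂ) : (E A).trace = A.trace := by
  simpa [hE.map_one] using hE.trace_map_mul A 1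

lemma one : IsCondExp (1 : Module.End ℂ (Matrix ι ι ℂ)) where
  trace_map_mul _ _ := rfl
  map_mul_map _ _ := rfl
  map_map_mul _ _ := rfl
  map_one := rfl
  map_conjTranspose _ := rfl
  posDef _ h := h

lemma mul (hE : IsCondExp E) (hF : IsCondExp F) (h : Commute E F) : IsCondExp (E * F) where
  trace_map_mul A B := by
    rw [Module.End.mul_apply, hE.trace_map_mul, hF.trace_map_mul, h.eq, Module.End.mul_apply]
  map_mul_map A B := by
    nth_rw 2 [h.eq]
    simp only [Module.End.mul_apply]
    rw [hF.map_mul_map, ← Module.End.mul_apply F E, ← h.eq, Module.End.mul_apply,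
      hE.map_mul_map]
  map_map_mul A B := by
    nth_rw 2 [h.eq]
    simp only [Module.End.mul_apply]
    rw [hF.map_map_mul, ← Module.End.mul_apply F E, ← h.eq, Module.End.mul_apply,
      hE.map_map_mul]
  map_one := by simp [hE.map_one, hF.map_one]
  map_conjTranspose A := by simp [hE.map_conjTranspose, hF.map_conjTranspose]
  posDef A hA := hE.posDef _ (hF.posDef _ hA)

/-- The fixed points of a conditional expectation form a subalgebra. -/
def fixedSubalgebra (hE : IsCondExp E) : Subalgebra ℂ (Matrix ι ι ℂ) where
  carrier := {A | E A = A}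
  mul_mem' {A B} (hA : E A = A) (hB : E B = B) := by
    have := hE.map_mul_map A B
    rwa [hA, hB] at this
  add_mem' {A B} (hA : E A = A) (hB : E B = B) := by
    change E (A + B) = A + B
    rw [map_add, hA, hB]
  algebraMap_mem' r := by
    change E (algebraMap ℂ _ r) = _
    rw [Algebra.algebraMap_eq_smul_one, map_smul, hE.map_one]

end IsCondExp

lemma exists_aeval_eq_matLog (A : Matrix ι ι ℂ) :
    ∃ P : Polynomial ℂ, Polynomial.aeval A P = matLog A := by
  by_cases h : A.IsHermitian
  swap
  · exact ⟨0, by simp [matLog, h]⟩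
  classical
  let s : Finset ℂ := Finset.univ.image fun i => (h.eigenvalues i : ℂ)
  let P : Polynomial ℂ := Lagrange.interpolate s id fun z => (Real.log z.re : ℂ)
  have hP : ∀ i, P.eval (h.eigenvalues i : ℂ) = (Real.log (h.eigenvalues i) : ℂ) := by
    intro i
    have := Lagrange.eval_interpolate_at_node (s := s) (v := id)
      (fun z : ℂ => (Real.log z.re : ℂ)) (Function.injective_id.injOn)
      (i := (h.eigenvalues i : ℂ)) (by simp [s])
    refine this.trans ?_
    simp
  let φ : (ι → ℂ) →ₐ[ℂ] Matrix ι ι ℂ :=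
    (AlgEquivClass.toAlgEquiv
      (Unitary.conjStarAlgAut ℂ (Matrix ι ι ℂ) h.eigenvectorUnitary)).toAlgHom.comp
      (diagonalAlgHom (n := ι) (α := ℂ) ℂ)
  have hφ : ∀ f : ι → ℝ, φ (fun i => (f i : ℂ)) = conjDiag h.eigenvectorUnitary f := fun _ => rfl
  have hd : Polynomial.aeval (fun i => (h.eigenvalues i : ℂ)) P
      = fun i => (Real.log (h.eigenvalues i) : ℂ) := by
    ext i
    rw [← hP i]
    simp [Polynomial.aeval_def, Polynomial.eval₂_eq_eval_map]
  refine ⟨P, ?_⟩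
  have := Polynomial.aeval_algHom_apply φ (fun i => (h.eigenvalues i : ℂ)) P
  rwa [hd, hφ, hφ (fun i => Real.log (h.eigenvalues i)), conjDiag_eigenvalues,
    ← (dif_pos h : matLog A = _)] at this

lemma IsCondExp.map_matLog {E : Module.End ℂ (Matrix ι ι ℂ)} (hE : IsCondExp E)
    {A : Matrix ι ι ℂ} (hA : E A = A) : E (matLog A) = matLog A := by
  obtain ⟨P, hP⟩ := exists_aeval_eq_matLog A
  rw [← hP]
  have hmem : A ∈ hE.fixedSubalgebra := hA
  exact Algebra.adjoin_le (Set.singleton_subset_iff.2 hmem)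
    (Polynomial.aeval_mem_adjoin_singleton ℂ A)

/-- **Data processing inequality** for conditional expectations. -/
lemma IsCondExp.relEntropy_map_le {E : Module.End ℂ (Matrix ι ι ℂ)} (hE : IsCondExp E)
    {A B : Matrix ι ι ℂ} (hA : A.PosDef) (hB : B.PosDef) :
    relEntropy (E A) (E B) ≤ relEntropy A B := by
  have hA' := hE.posDef A hA
  have hB' := hE.posDef B hB
  obtain ⟨i1, e1⟩ := integral_chiForm hA.1.eigenvectorUnitary hB.1.eigenvectorUnitary
    hA.eigenvalues_pos hB.eigenvalues_pos
  obtain ⟨i2, e2⟩ := integral_chiForm hA'.1.eigenvectorUnitary hB'.1.eigenvectorUnitary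
    hA'.eigenvalues_pos hB'.eigenvalues_pos
  rw [relEntropy_eq_sum hA.1 hB.1, relEntropy_eq_sum hA'.1 hB'.1, ← e1, ← e2]
  refine setIntegral_mono_on i2 i1 measurableSet_Ioi fun t ht => ?_
  have ht0 : 0 ≤ t := le_of_lt ht
  gcongr
  obtain ⟨Y, hY, hchi⟩ := exists_chiForm_eq hA'.1.eigenvectorUnitary hB'.1.eigenvectorUnitary
    hA'.eigenvalues_pos hB'.eigenvalues_pos ht0
  have hle := le_chiForm hA.1.eigenvectorUnitary hB.1.eigenvectorUnitary
    hA.eigenvalues_pos hB.eigenvalues_pos ht0 (E Y)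
  rw [conjDiag_eigenvalues, conjDiag_eigenvalues] at hY hchi hle
  refine le_trans (le_of_eq ?_) hle
  have hYE : E Y * E B + (t : ℂ) • (E A * E Y) = E A - E B := by
    have := congrArg E hY
    rwa [map_add, map_smul, hE.map_mul_map, hE.map_map_mul, map_sub, hE.map_map, hE.map_map]
      at this
  have hcross : ((A - B)ᴴ * E Y).trace = ((E A - E B)ᴴ * Y).trace := by
    rw [← hE.trace_map_mul, hE.map_conjTranspose, map_sub]
  have hcross' : ((E A - E B)ᴴ * E Y).trace = ((E A - E B)ᴴ * Y).trace := by
    rw [← map_sub, ← hE.map_conjTranspose, ← hE.trace_map_mul, hE.map_map]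
  have hEY : (E Y)ᴴ = E Yᴴ := (hE.map_conjTranspose Y).symm
  have q1 : ((E Y)ᴴ * (E Y * B)).trace = ((E Y)ᴴ * (E Y * E B)).trace := by
    rw [← hE.map_map_mul, hEY, ← hE.trace_map_mul, hE.map_map]
  have q2 : ((E Y)ᴴ * (A * E Y)).trace = ((E Y)ᴴ * (E A * E Y)).trace := by
    rw [← hE.map_mul_map, hEY, ← hE.trace_map_mul, hE.map_map]
  have hquad : ((E Y)ᴴ * (E Y * B + (t : ℂ) • (A * E Y))).trace
      = star ((E A - E B)ᴴ * Y).trace := by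
    rw [mul_add, trace_add, mul_smul_comm, trace_smul, q1, q2, ← trace_smul, ← mul_smul_comm,
      ← trace_add, ← mul_add, hYE, ← hcross', ← trace_conjTranspose, conjTranspose_mul,
      conjTranspose_conjTranspose]
  rw [hcross, hquad, hchi, Complex.star_def, Complex.conj_re]
  ring

lemma IsCondExp.relEntropy_self_map {E : Module.End ℂ (Matrix ι ι ℂ)} (hE : IsCondExp E)
    {A : Matrix ι ι ℂ} (hA : A.PosDef) :
    relEntropy A (E A) = vnEntropy (E A) - vnEntropy A := by
  have h : (A * matLog (E A)).trace = (E A * matLog (E A)).trace := by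
    rw [← hE.map_matLog (hE.map_map A), ← hE.trace_map_mul, hE.map_matLog (hE.map_map A)]
  rw [relEntropy, h, trace_mul_matLog_self (hE.posDef A hA).1, hE.trace_map]
  ring

/-- **Strong subadditivity** of the von Neumann entropy, for a commuting square of conditional
expectations. -/
lemma vnEntropy_strong_subadditivity {E F : Module.End ℂ (Matrix ι ι ℂ)} (hE : IsCondExp E)
    (hF : IsCondExp F) (h : Commute E F) {A : Matrix ι ι ℂ} (hA : A.PosDef) :
    vnEntropy A + vnEntropy (E (F A)) ≤ vnEntropy (E A) + vnEntropy (F A) := by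
  have h1 := hE.relEntropy_map_le hA (hF.posDef A hA)
  have h2 : E (F A) = F (E A) := by
    rw [← Module.End.mul_apply, h.eq, Module.End.mul_apply]
  rw [h2, hF.relEntropy_self_map hA, hF.relEntropy_self_map (hE.posDef A hA)] at h1
  rw [h2]
  linarith

/-- The pinching `A ↦ (A + P A P) / 2`. -/
noncomputable def pinching (P : Matrix ι ι ℂ) : Module.End ℂ (Matrix ι ι ℂ) :=
  (2⁻¹ : ℂ) • (LinearMap.id + LinearMap.mulLeftRight ℂ (P, P))

lemma pinching_apply (P A : Matrix ι ι ℂ) : pinching P A = (2⁻¹ : ℂ) • (A + P * A * P) := by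
  simp [pinching]

lemma isCondExp_pinching {P : Matrix ι ι ℂ} (hP : P.IsHermitian) (hPP : P * P = 1) :
    IsCondExp (pinching P) := by
  have hc : ∀ A, P * pinching P A = pinching P A * P := fun A => by
    simp only [pinching_apply, mul_smul_comm, smul_mul_assoc, mul_add, add_mul, mul_assoc, hPP,
      mul_one]
    simp only [← mul_assoc, hPP, one_mul, add_comm]
  refine ⟨fun A B => ?_, fun A B => ?_, fun A B => ?_, ?_, fun A => ?_, fun A hA => ?_⟩
  · simp only [pinching_apply, mul_smul_comm, smul_mul_assoc, mul_add, add_mul, trace_smul,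
      trace_add]
    congr 2
    rw [mul_assoc, mul_assoc, trace_mul_comm]
    simp only [mul_assoc]
  · rw [pinching_apply P (A * _), pinching_apply P A, smul_mul_assoc, add_mul]
    simp only [mul_assoc, hc]
  · rw [pinching_apply P (_ * B), pinching_apply P B, mul_smul_comm, mul_add]
    simp only [← mul_assoc, hc]
  · rw [pinching_apply, mul_one, hPP, ← two_smul ℂ, smul_smul]
    norm_num
  · simp [pinching_apply, hP.eq, mul_assoc]
  · rw [pinching_apply]
    refine PosDef.smul (hA.add_posSemidef ?_) (by norm_num)
    have := hA.posSemidef.mul_mul_conjTranspose_same P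
    rwa [hP.eq] at this

lemma commute_pinching {P Q : Matrix ι ι ℂ} (h : P * Q = Q * P ∨ P * Q = -(Q * P)) :
    Commute (pinching P) (pinching Q) := by
  have key : ∀ A, P * Q * A * (Q * P) = Q * P * A * (P * Q) := by
    intro A
    rcases h with h | h
    · rw [h]
    · rw [h]; simp
  refine LinearMap.ext fun A => ?_
  have hk := key A
  simp only [mul_assoc] at hk
  simp only [Module.End.mul_apply, pinching_apply, mul_add, add_mul, mul_smul_comm,
    smul_mul_assoc, mul_assoc, hk, smul_add]
  abel

end ConditionalExpectation

section Depolarizing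

variable {k c : ℕ}

/-- Flip the `i`-th bit of a bit string. -/
def flipBit (i : Fin k) (x : Fin k → Fin 2) : Fin k → Fin 2 :=
  Function.update x i (1 - x i)

lemma flipBit_same (i : Fin k) (x : Fin k → Fin 2) : flipBit i x i = 1 - x i := by
  simp [flipBit]

lemma flipBit_of_ne {i j : Fin k} (h : j ≠ i) (x : Fin k → Fin 2) : flipBit i x j = x j := by
  simp [flipBit, h]

lemma flipBit_flipBit (i : Fin k) (x : Fin k → Fin 2) : flipBit i (flipBit i x) = x := by
  ext1 j
  by_cases h : j = i
  · subst h; simp [flipBit_same]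
  · simp [flipBit_of_ne h]

lemma flipBit_comm (i j : Fin k) (x : Fin k → Fin 2) :
    flipBit i (flipBit j x) = flipBit j (flipBit i x) := by
  by_cases hij : i = j
  · rw [hij]
  ext1 l
  by_cases hi : l = i
  · subst hi; simp [flipBit_same, flipBit_of_ne hij]
  · by_cases hj : l = j
    · subst hj; simp [flipBit_same, flipBit_of_ne hi]
    · simp [flipBit_of_ne hi, flipBit_of_ne hj]

lemma eq_flipBit_comm {i : Fin k} {x y : Fin k → Fin 2} : y = flipBit i x ↔ x = flipBit i y :=
  ⟨fun h => by rw [h, flipBit_flipBit], fun h => by rw [h, flipBit_flipBit]⟩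

/-- The Pauli operator `X` on the system qubit `i`. -/
def pauliX (c : ℕ) (i : Fin k) :
    Matrix ((Fin k → Fin 2) × (Fin c → Fin 2)) ((Fin k → Fin 2) × (Fin c → Fin 2)) ℂ :=
  of fun x y => if y = (flipBit i x.1, x.2) then 1 else 0

/-- The Pauli operator `Z` on the system qubit `i`. -/
def pauliZ (c : ℕ) (i : Fin k) :
    Matrix ((Fin k → Fin 2) × (Fin c → Fin 2)) ((Fin k → Fin 2) × (Fin c → Fin 2)) ℂ :=
  diagonal fun x => if x.1 i = 0 then 1 else -1

lemma pair_eq_flipBit_comm {i : Fin k} {x y : (Fin k → Fin 2) × (Fin c → Fin 2)} :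
    y = (flipBit i x.1, x.2) ↔ x = (flipBit i y.1, y.2) := by
  rw [Prod.ext_iff, Prod.ext_iff]
  exact and_congr eq_flipBit_comm eq_comm

lemma pauliX_mul_apply (i : Fin k)
    (A : Matrix ((Fin k → Fin 2) × (Fin c → Fin 2)) ((Fin k → Fin 2) × (Fin c → Fin 2)) ℂ)
    (x y : (Fin k → Fin 2) × (Fin c → Fin 2)) :
    (pauliX c i * A) x y = A (flipBit i x.1, x.2) y := by
  simp [mul_apply, pauliX]

lemma mul_pauliX_apply (i : Fin k)
    (A : Matrix ((Fin k → Fin 2) × (Fin c → Fin 2)) ((Fin k → Fin 2) × (Fin c → Fin 2)) ℂ)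
    (x y : (Fin k → Fin 2) × (Fin c → Fin 2)) :
    (A * pauliX c i) x y = A x (flipBit i y.1, y.2) := by
  simp [mul_apply, pauliX, pair_eq_flipBit_comm (y := y)]

lemma pauliX_isHermitian (i : Fin k) : (pauliX c i).IsHermitian := by
  ext x y
  simp only [conjTranspose_apply, pauliX, of_apply, pair_eq_flipBit_comm (x := y)]
  split_ifs <;> simp

lemma pauliX_mul_self (i : Fin k) : pauliX c i * pauliX c i = 1 := by
  ext x y
  rw [pauliX_mul_apply]
  simp [pauliX, flipBit_flipBit, one_apply, eq_comm]

lemma pauliZ_isHermitian (i : Fin k) : (pauliZ c i).IsHermitian := by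
  rw [IsHermitian, pauliZ, diagonal_conjTranspose]
  congr 1
  ext x
  simp only [Pi.star_apply]
  split_ifs <;> simp

lemma pauliZ_mul_self (i : Fin k) : pauliZ c i * pauliZ c i = 1 := by
  rw [pauliZ, diagonal_mul_diagonal, ← diagonal_one]
  congr 1
  ext x
  split_ifs <;> simp

lemma pauliX_comm (i j : Fin k) : pauliX c i * pauliX c j = pauliX c j * pauliX c i := by
  ext x y
  rw [pauliX_mul_apply, pauliX_mul_apply]
  simp [pauliX, flipBit_comm i j]

lemma pauliZ_comm (i j : Fin k) : pauliZ c i * pauliZ c j = pauliZ c j * pauliZ c i := by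
  simp [pauliZ, mul_comm]

lemma pauliX_mul_pauliZ (i j : Fin k) :
    pauliX c i * pauliZ c j = pauliZ c j * pauliX c i ∨
      pauliX c i * pauliZ c j = -(pauliZ c j * pauliX c i) := by
  by_cases h : j = i
  · right
    subst h
    ext x y
    have hxy : (flipBit j x.1, x.2) = y ↔ x = (flipBit j y.1, y.2) :=
      eq_comm.trans pair_eq_flipBit_comm
    rw [pauliX_mul_apply, Matrix.neg_apply, mul_pauliX_apply, pauliZ, diagonal_apply,
      diagonal_apply]
    simp only [hxy, flipBit_same]
    generalize x.1 j = b
    by_cases h : x = (flipBit j y.1, y.2) <;> fin_cases b <;> simp [h]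
  · left
    ext x y
    have hxy : (flipBit i x.1, x.2) = y ↔ x = (flipBit i y.1, y.2) :=
      eq_comm.trans pair_eq_flipBit_comm
    rw [pauliX_mul_apply, mul_pauliX_apply, pauliZ, diagonal_apply, diagonal_apply]
    simp only [hxy, flipBit_of_ne h]

/-- Full depolarization of the system qubit `i`. -/
noncomputable def depolQubit (c : ℕ) (i : Fin k) : Module.End ℂ
    (Matrix ((Fin k → Fin 2) × (Fin c → Fin 2)) ((Fin k → Fin 2) × (Fin c → Fin 2)) ℂ) :=
  pinching (pauliX c i) * pinching (pauliZ c i)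

lemma isCondExp_depolQubit (i : Fin k) : IsCondExp (depolQubit c i) :=
  (isCondExp_pinching (pauliX_isHermitian i) (pauliX_mul_self i)).mul
    (isCondExp_pinching (pauliZ_isHermitian i) (pauliZ_mul_self i))
    (commute_pinching (pauliX_mul_pauliZ i i))

lemma commute_depolQubit (i j : Fin k) : Commute (depolQubit c i) (depolQubit c j) := by
  have hXX := commute_pinching (.inl (pauliX_comm (c := c) i j))
  have hZZ := commute_pinching (.inl (pauliZ_comm (c := c) i j))
  have hXZ := commute_pinching (pauliX_mul_pauliZ (c := c) i j)
  have hZX := (commute_pinching (pauliX_mul_pauliZ (c := c) j i)).symm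
  exact (hXX.mul_right hXZ).mul_left (hZX.mul_right hZZ)

lemma depolQubit_apply (i : Fin k)
    (A : Matrix ((Fin k → Fin 2) × (Fin c → Fin 2)) ((Fin k → Fin 2) × (Fin c → Fin 2)) ℂ)
    (x y : (Fin k → Fin 2) × (Fin c → Fin 2)) :
    depolQubit c i A x y = if x.1 i = y.1 i then
      2⁻¹ * (A x y + A (flipBit i x.1, x.2) (flipBit i y.1, y.2)) else 0 := by
  have hZ : ∀ u v : (Fin k → Fin 2) × (Fin c → Fin 2),
      pinching (pauliZ c i) A u v = if u.1 i = v.1 i then A u v else 0 := by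
    intro u v
    simp only [pinching_apply, Matrix.smul_apply, Matrix.add_apply, pauliZ, mul_diagonal,
      diagonal_mul, smul_eq_mul]
    generalize u.1 i = a
    generalize v.1 i = b
    fin_cases a <;> fin_cases b <;> simp <;> ring
  rw [depolQubit, Module.End.mul_apply, pinching_apply, Matrix.smul_apply, Matrix.add_apply,
    mul_pauliX_apply, pauliX_mul_apply, hZ, hZ]
  by_cases h : x.1 i = y.1 i <;> simp [h, flipBit_same]

/-- `depolSet S` as a linear map. -/
noncomputable def depolSetLin (c : ℕ) (S : Finset (Fin k)) : Module.End ℂ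
    (Matrix ((Fin k → Fin 2) × (Fin c → Fin 2)) ((Fin k → Fin 2) × (Fin c → Fin 2)) ℂ) where
  toFun := depolSet S
  map_add' A B := by
    ext x y
    simp only [depolSet, of_apply, Matrix.add_apply, Finset.sum_add_distrib]
    split_ifs <;> ring
  map_smul' r A := by
    ext x y
    simp only [depolSet, of_apply, Matrix.smul_apply, smul_eq_mul, ← Finset.mul_sum,
      RingHom.id_apply]
    split_ifs <;> ring

lemma inv_two_pow_card_mul (S : Finset (Fin k)) (z : ℂ) :
    ((2 : ℂ) ^ S.card)⁻¹ * (((2 : ℂ) ^ (k - S.card))⁻¹ * z) = ((2 : ℂ) ^ k)⁻¹ * z := by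
  have h : S.card ≤ k := by simpa using S.card_le_univ
  rw [← mul_assoc, ← mul_inv, ← pow_add, Nat.add_sub_cancel' h]

lemma depolSetLin_empty : depolSetLin c (∅ : Finset (Fin k)) = 1 := by
  refine LinearMap.ext fun A => ?_
  ext x y
  simp [depolSetLin, depolSet]

lemma sum_insert_piecewise {i : Fin k} {S : Finset (Fin k)} (hi : i ∉ S)
    (f : (Fin k → Fin 2) → (Fin k → Fin 2) → ℂ) {x y : Fin k → Fin 2} (hxy : x i = y i) :
    2 * ∑ z, f ((insert i S).piecewise z x) ((insert i S).piecewise z y)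
      = ∑ z, f (S.piecewise z x) (S.piecewise z y)
        + ∑ z, f (S.piecewise z (flipBit i x)) (S.piecewise z (flipBit i y)) := by
  have hflip : ∑ z, f ((insert i S).piecewise z x) ((insert i S).piecewise z y)
      = ∑ z, f ((insert i S).piecewise (flipBit i z) x)
          ((insert i S).piecewise (flipBit i z) y) :=
    (Equiv.sum_comp (Function.Involutive.toPerm _ (flipBit_flipBit i))
      fun z => f ((insert i S).piecewise z x) ((insert i S).piecewise z y)).symm
  rw [two_mul]
  nth_rw 2 [hflip]
  rw [← Finset.sum_add_distrib, ← Finset.sum_add_distrib]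
  refine Finset.sum_congr rfl fun z _ => ?_
  have hsame : ∀ w v : Fin k → Fin 2, w i = v i →
      (insert i S).piecewise w v = S.piecewise (flipBit i w) v ∧
      (insert i S).piecewise w v = S.piecewise w v := by
    intro w v hwv
    constructor <;>
    · ext1 j
      by_cases hj : j = i
      · subst hj; simp [hi, hwv]
      · by_cases hS : j ∈ S <;> simp [hj, hS, flipBit_of_ne hj, Finset.piecewise]
  have hdiff : ∀ w v : Fin k → Fin 2, w i = 1 - v i →
      (insert i S).piecewise w v = S.piecewise (flipBit i w) (flipBit i v) ∧
      (insert i S).piecewise w v = S.piecewise w (flipBit i v) := by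
    intro w v hwv
    constructor <;>
    · ext1 j
      by_cases hj : j = i
      · subst hj; simp [hi, hwv, flipBit_same]
      · by_cases hS : j ∈ S <;> simp [hj, hS, flipBit_of_ne hj, Finset.piecewise]
  by_cases hz : z i = x i
  · have hf : flipBit i z i = 1 - x i := by rw [flipBit_same, hz]
    have hx := (hdiff (flipBit i z) x hf).1
    have hy := (hdiff (flipBit i z) y (hxy ▸ hf)).1
    rw [flipBit_flipBit] at hx hy
    rw [(hsame z x hz).2, (hsame z y (hxy ▸ hz)).2, hx, hy]
  · have hz' : z i = 1 - x i := by
      generalize z i = a at *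
      generalize x i = b at *
      clear * - hz
      revert a b
      decide
    have hf : flipBit i z i = x i := by rw [flipBit_same, hz']; simp
    have hx := (hsame (flipBit i z) x hf).1
    have hy := (hsame (flipBit i z) y (hxy ▸ hf)).1
    rw [flipBit_flipBit] at hx hy
    rw [(hdiff z x hz').2, (hdiff z y (hxy ▸ hz')).2, hx, hy, add_comm]

lemma depolSetLin_insert {i : Fin k} {S : Finset (Fin k)} (hi : i ∉ S) :
    depolSetLin c (insert i S) = depolQubit c i * depolSetLin c S := by
  refine LinearMap.ext fun A => ?_
  ext x y
  rw [Module.End.mul_apply, depolQubit_apply]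
  simp only [depolSetLin, LinearMap.coe_mk, AddHom.coe_mk, depolSet, of_apply,
    inv_two_pow_card_mul]
  by_cases hxy : x.1 i = y.1 i
  · have hcond : (∀ j ∈ S, flipBit i x.1 j = flipBit i y.1 j) ↔ ∀ j ∈ S, x.1 j = y.1 j := by
      refine forall₂_congr fun j hj => ?_
      have hji : j ≠ i := fun h => hi (h ▸ hj)
      rw [flipBit_of_ne hji, flipBit_of_ne hji]
    have hsum := sum_insert_piecewise hi (fun u v => A (u, x.2) (v, y.2)) hxy
    simp only [Finset.forall_mem_insert, hxy, hcond, true_and, if_true]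
    split_ifs with h
    · rw [← mul_add, ← hsum]
      ring
    · simp
  · rw [if_neg hxy, if_neg]
    exact fun h => hxy (h i (Finset.mem_insert_self i S))

lemma commute_depolQubit_depolSetLin (i : Fin k) (S : Finset (Fin k)) :
    Commute (depolQubit c i) (depolSetLin c S) := by
  induction S using Finset.induction_on with
  | empty => rw [depolSetLin_empty]; exact Commute.one_right _
  | insert j S hj ih =>
    rw [depolSetLin_insert hj]
    exact (commute_depolQubit i j).mul_right ih

lemma isCondExp_depolSetLin (S : Finset (Fin k)) : IsCondExp (depolSetLin c S) := by
  induction S using Finset.induction_on with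
  | empty => rw [depolSetLin_empty]; exact IsCondExp.one
  | insert j S hj ih =>
    rw [depolSetLin_insert hj]
    exact (isCondExp_depolQubit j).mul ih (commute_depolQubit_depolSetLin j S)

end Depolarizing

section Noise

variable {k c : ℕ}

/-- Depolarizing noise with parameter `p` on each of the system qubits in `U`. -/
noncomputable def depolNoise (c : ℕ) (p : ℝ) (U : Finset (Fin k)) : Module.End ℂ
    (Matrix ((Fin k → Fin 2) × (Fin c → Fin 2)) ((Fin k → Fin 2) × (Fin c → Fin 2)) ℂ) :=
  ∑ S ∈ U.powerset, ((p : ℂ) ^ S.card * ((1 - p : ℝ) : ℂ) ^ (U.card - S.card)) • depolSetLin c S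

lemma depolNoise_empty (p : ℝ) : depolNoise c p (∅ : Finset (Fin k)) = 1 := by
  simp [depolNoise, depolSetLin_empty]

lemma depolNoise_univ_apply (p : ℝ)
    (A : Matrix ((Fin k → Fin 2) × (Fin c → Fin 2)) ((Fin k → Fin 2) × (Fin c → Fin 2)) ℂ) :
    depolNoise c p Finset.univ A = depolChannel p A := by
  simp [depolNoise, depolChannel, depolSetLin, LinearMap.sum_apply]

lemma depolNoise_insert (p : ℝ) {i : Fin k} {U : Finset (Fin k)} (hi : i ∉ U) :
    depolNoise c p (insert i U) =
      (((1 - p : ℝ) : ℂ) • 1 + (p : ℂ) • depolQubit c i) * depolNoise c p U := by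
  rw [depolNoise, Finset.sum_powerset_insert hi, add_mul, smul_mul_assoc, one_mul,
    smul_mul_assoc, depolNoise, Finset.mul_sum, Finset.smul_sum, Finset.smul_sum]
  congr 1
  · refine Finset.sum_congr rfl fun S hS => ?_
    have hcard := Finset.card_le_card (Finset.mem_powerset.mp hS)
    rw [Finset.card_insert_of_notMem hi, Nat.succ_sub hcard, pow_succ, smul_smul]
    congr 1
    ring
  · refine Finset.sum_congr rfl fun S hS => ?_
    have hiS : i ∉ S := fun h => hi (Finset.mem_powerset.mp hS h)
    rw [Finset.card_insert_of_notMem hi, Finset.card_insert_of_notMem hiS, Nat.succ_sub_succ,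
      depolSetLin_insert hiS, mul_smul_comm, smul_smul]
    congr 1
    ring

lemma commute_depolQubit_depolNoise (p : ℝ) (i : Fin k) (U : Finset (Fin k)) :
    Commute (depolQubit c i) (depolNoise c p U) :=
  Commute.sum_right _ _ _ fun S _ => (commute_depolQubit_depolSetLin i S).smul_right _

lemma depolNoise_one (p : ℝ) (U : Finset (Fin k)) : depolNoise c p U 1 = 1 := by
  induction U using Finset.induction_on with
  | empty => rw [depolNoise_empty]; rfl
  | insert i U hi ih =>
    rw [depolNoise_insert p hi, Module.End.mul_apply, ih, LinearMap.add_apply,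
      LinearMap.smul_apply, LinearMap.smul_apply, Module.End.one_apply,
      (isCondExp_depolQubit i).map_one, ← add_smul]
    simp

lemma Matrix.PosDef.convex_comb {ι : Type*} [Fintype ι] [DecidableEq ι] {A B : Matrix ι ι ℂ}
    (hA : A.PosDef) (hB : B.PosDef) {p : ℝ} (hp0 : 0 ≤ p) (hp1 : p ≤ 1) :
    (((1 - p : ℝ) : ℂ) • A + (p : ℂ) • B).PosDef := by
  rcases hp0.eq_or_lt with rfl | hp
  · simpa using hA
  · have h1 : (0 : ℂ) ≤ ((1 - p : ℝ) : ℂ) := by exact_mod_cast sub_nonneg.mpr hp1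
    have h2 : (0 : ℂ) < (p : ℂ) := by exact_mod_cast hp
    exact PosDef.posSemidef_add (hA.posSemidef.smul h1) (hB.smul h2)

lemma IsCondExp.isHermitian {ι : Type*} [Fintype ι] [DecidableEq ι]
    {E : Module.End ℂ (Matrix ι ι ℂ)} (hE : IsCondExp E) {A : Matrix ι ι ℂ}
    (hA : A.IsHermitian) : (E A).IsHermitian := by
  rw [IsHermitian, ← hE.map_conjTranspose, hA]

lemma isHermitian_depolNoise (p : ℝ) (U : Finset (Fin k))
    {A : Matrix ((Fin k → Fin 2) × (Fin c → Fin 2)) ((Fin k → Fin 2) × (Fin c → Fin 2)) ℂ}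
    (hA : A.IsHermitian) : (depolNoise c p U A).IsHermitian := by
  rw [depolNoise, LinearMap.sum_apply, IsHermitian, conjTranspose_sum]
  refine Finset.sum_congr rfl fun S _ => ?_
  rw [LinearMap.smul_apply, conjTranspose_smul, (isCondExp_depolSetLin S).isHermitian hA]
  simp

lemma posDef_depolNoise {p : ℝ} (hp0 : 0 ≤ p) (hp1 : p ≤ 1) (U : Finset (Fin k))
    {A : Matrix ((Fin k → Fin 2) × (Fin c → Fin 2)) ((Fin k → Fin 2) × (Fin c → Fin 2)) ℂ}
    (hA : A.PosDef) : (depolNoise c p U A).PosDef := by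
  induction U using Finset.induction_on with
  | empty => rw [depolNoise_empty]; exact hA
  | insert i U hi ih =>
    rw [depolNoise_insert p hi]
    exact ih.convex_comb ((isCondExp_depolQubit i).posDef _ ih) hp0 hp1

/-- Entropy interpolation between no noise and full depolarization of the qubits in `U`. -/
lemma vnEntropy_depolNoise {p : ℝ} (hp0 : 0 ≤ p) (hp1 : p ≤ 1) (U : Finset (Fin k))
    {A : Matrix ((Fin k → Fin 2) × (Fin c → Fin 2)) ((Fin k → Fin 2) × (Fin c → Fin 2)) ℂ}
    (hA : A.PosDef) :
    (1 - p) * vnEntropy A + p * vnEntropy (depolSetLin c U A) ≤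
      vnEntropy (depolNoise c p U A) := by
  induction U using Finset.induction_on generalizing A with
  | empty =>
    rw [depolNoise_empty, depolSetLin_empty, Module.End.one_apply]
    linarith
  | insert i U hi ih =>
    have hE := isCondExp_depolQubit (c := c) i
    have hTA := posDef_depolNoise hp0 hp1 U hA
    have hEA := hE.posDef _ hA
    have hcomm : depolQubit c i (depolNoise c p U A) = depolNoise c p U (depolQubit c i A) :=
      LinearMap.congr_fun (commute_depolQubit_depolNoise p i U) A
    have hcomm' : depolQubit c i (depolSetLin c U A) = depolSetLin c U (depolQubit c i A) :=
      LinearMap.congr_fun (commute_depolQubit_depolSetLin i U) A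
    have hconc := vnEntropy_concave hTA (hE.posDef _ hTA) hp0 hp1
      (hTA.convex_comb (hE.posDef _ hTA) hp0 hp1)
    have hssa := vnEntropy_strong_subadditivity hE (isCondExp_depolSetLin U)
      (commute_depolQubit_depolSetLin i U) hA
    have h1 := ih hA
    have h2 := ih hEA
    rw [depolNoise_insert p hi, depolSetLin_insert hi, Module.End.mul_apply,
      Module.End.mul_apply]
    refine le_trans ?_ hconc
    rw [hcomm]
    rw [hcomm'] at hssa ⊢
    have h1' := mul_le_mul_of_nonneg_left h1 (sub_nonneg.mpr hp1)
    have h2' := mul_le_mul_of_nonneg_left h2 hp0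
    have h3 := mul_le_mul_of_nonneg_left hssa (mul_nonneg hp0 (sub_nonneg.mpr hp1))
    linarith

end Noise

section MaximallyMixed

variable {k c : ℕ}

/-- Fully depolarizing all `k` system qubits leaves at least `k log 2` of entropy. -/
lemma vnEntropy_depolSetLin_univ
    {A : Matrix ((Fin k → Fin 2) × (Fin c → Fin 2)) ((Fin k → Fin 2) × (Fin c → Fin 2)) ℂ}
    (hA : A.PosSemidef) (htr : A.trace = 1) :
    k * Real.log 2 ≤ vnEntropy (depolSetLin c Finset.univ A) := by
  set σ : Matrix (Fin c → Fin 2) (Fin c → Fin 2) ℂ :=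
    ∑ z : Fin k → Fin 2, A.submatrix (Prod.mk z) (Prod.mk z) with hσ
  have hσpos : σ.PosSemidef := posSemidef_sum _ fun z _ => hA.submatrix _
  have hσtr : σ.trace = 1 := by
    rw [← htr, hσ, trace_sum, trace, Fintype.sum_prod_type]
    rfl
  set V := hσpos.isHermitian.eigenvectorUnitary
  set q := hσpos.isHermitian.eigenvalues
  set s : ℝ := (2 ^ k)⁻¹ with hs
  have hqsum : ∑ a, q a = 1 := by
    have h := hσpos.isHermitian.trace_eq_sum_eigenvalues
    rw [hσtr] at h
    simpa using (congrArg Complex.re h).symm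
  have hq0 : ∀ a, 0 ≤ q a := hσpos.eigenvalues_nonneg
  have hq1 : ∀ a, q a ≤ 1 := fun a =>
    hqsum ▸ Finset.single_le_sum (fun b _ => hq0 b) (Finset.mem_univ a)
  let W : unitaryGroup ((Fin k → Fin 2) × (Fin c → Fin 2)) ℂ :=
    ⟨kroneckerMap (· * ·) 1 (V : Matrix (Fin c → Fin 2) (Fin c → Fin 2) ℂ),
      kronecker_mem_unitary (one_mem _) V.2⟩
  have hform : depolSetLin c Finset.univ A = conjDiag W (fun x => s * q x.2) := by
    have hdiag : diagonal (fun x : (Fin k → Fin 2) × (Fin c → Fin 2) => ((s * q x.2 : ℝ) : ℂ)) =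
        (s : ℂ) • kroneckerMap (· * ·) (1 : Matrix (Fin k → Fin 2) (Fin k → Fin 2) ℂ)
          (diagonal fun a => (q a : ℂ)) := by
      ext x y
      by_cases h1 : x.1 = y.1 <;> by_cases h2 : x.2 = y.2 <;>
        simp [diagonal_apply, one_apply, Prod.ext_iff, h1, h2]
    have hW : conjDiag W (fun x => s * q x.2) =
        (s : ℂ) • kroneckerMap (· * ·) (1 : Matrix (Fin k → Fin 2) (Fin k → Fin 2) ℂ) σ := by
      rw [conjDiag, basisMat, hdiag, mul_smul_comm, smul_mul_assoc, star_eq_conjTranspose,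
        conjTranspose_kronecker, ← mul_kronecker_mul, ← mul_kronecker_mul]
      congr 2
      · simp
      · exact conjDiag_eigenvalues hσpos.isHermitian
    rw [hW]
    ext x y
    simp [depolSetLin, depolSet, hσ, hs, one_apply, funext_iff, Matrix.sum_apply]
  have hterm : ∀ a, (2 ^ k : ℝ) * Real.negMulLog (s * q a) =
      Real.negMulLog (q a) + k * Real.log 2 * q a := by
    intro a
    have h2 : (2 ^ k : ℝ) * s = 1 := mul_inv_cancel₀ (by positivity)
    have hlog : Real.negMulLog s = s * (k * Real.log 2) := by
      rw [Real.negMulLog, hs, Real.log_inv, Real.log_pow]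
      ring
    rw [Real.negMulLog_mul, hlog]
    linear_combination (Real.negMulLog (q a) + k * Real.log 2 * q a) * h2
  rw [hform, vnEntropy_conjDiag, Fintype.sum_prod_type]
  simp only [Finset.sum_const, Finset.card_univ, Fintype.card_pi, Fintype.card_fin,
    Finset.prod_const, nsmul_eq_mul, Nat.cast_pow, Nat.cast_ofNat, Finset.mul_sum, hterm]
  rw [Finset.sum_add_distrib, ← Finset.mul_sum, hqsum, mul_one]
  exact le_add_of_nonneg_left (Finset.sum_nonneg fun a _ =>
    Real.negMulLog_nonneg (hq0 a) (hq1 a))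

end MaximallyMixed

section Continuity

variable {ι : Type*} [Fintype ι] [DecidableEq ι]

lemma smul_conjDiag_add_smul_one (U : unitaryGroup ι ℂ) (f : ι → ℝ) (a b : ℝ) :
    (a : ℂ) • conjDiag U f + (b : ℂ) • 1 = conjDiag U fun i => a * f i + b := by
  have hdiag : diagonal (fun i => ((a * f i + b : ℝ) : ℂ)) =
      (a : ℂ) • diagonal (fun i => (f i : ℂ)) + (b : ℂ) • diagonal (fun _ => ((1 : ℝ) : ℂ)) := by
    rw [← diagonal_smul, ← diagonal_smul, diagonal_add]
    congr 1
    ext i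
    simp
  rw [← conjDiag_one U, conjDiag, conjDiag, conjDiag, hdiag]
  simp only [basisMat, mul_add, add_mul, mul_smul_comm, smul_mul_assoc]

lemma continuous_vnEntropy_mix_one {M : Matrix ι ι ℂ} (hM : M.IsHermitian) (b : ℝ) :
    Continuous fun t : ℝ => vnEntropy (((1 - t : ℝ) : ℂ) • M + ((t * b : ℝ) : ℂ) • 1) := by
  have h : ∀ t : ℝ, vnEntropy (((1 - t : ℝ) : ℂ) • M + ((t * b : ℝ) : ℂ) • 1) =
      ∑ i, Real.negMulLog ((1 - t) * hM.eigenvalues i + t * b) := by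
    intro t
    conv_lhs => rw [← conjDiag_eigenvalues hM]
    rw [smul_conjDiag_add_smul_one, vnEntropy_conjDiag]
  simp only [h]
  have := Real.continuous_negMulLog
  fun_prop

end Continuity

/-- `S(D_p^{n_c}(ρ)) ≥ (1−p)·S(ρ) + p·(n−n_c)·log 2`,
with `k = n − n_c` system qubits and `c = n_c` untouched qubits. -/
theorem entropy_depolarizing_lower_bound (k c : ℕ) (p : ℝ) (hp0 : 0 ≤ p) (hp1 : p ≤ 1)
    (ρ : Matrix ((Fin k → Fin 2) × (Fin c → Fin 2)) ((Fin k → Fin 2) × (Fin c → Fin 2)) ℂ)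
    (hρ : ρ.PosSemidef) (htr : ρ.trace = 1) :
    (1 - p) * vnEntropy ρ + p * k * Real.log 2 ≤ vnEntropy (depolChannel p ρ) := by
  set b : ℝ := (Fintype.card ((Fin k → Fin 2) × (Fin c → Fin 2)) : ℝ)⁻¹ with hb
  have hcard : (0 : ℝ) < Fintype.card ((Fin k → Fin 2) × (Fin c → Fin 2)) :=
    Nat.cast_pos.mpr Fintype.card_pos
  have hb0 : 0 < b := inv_pos.mpr hcard
  have hT := isHermitian_depolNoise p Finset.univ hρ.isHermitian
  have hcont := continuous_vnEntropy_mix_one hρ.isHermitian b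
  have hcontT := continuous_vnEntropy_mix_one hT b
  have hle : ∀ t ∈ Set.Ioc (0 : ℝ) 1,
      (1 - p) * vnEntropy (((1 - t : ℝ) : ℂ) • ρ + ((t * b : ℝ) : ℂ) • 1) + p * k * Real.log 2 ≤
        vnEntropy (((1 - t : ℝ) : ℂ) • depolNoise c p Finset.univ ρ + ((t * b : ℝ) : ℂ) • 1) := by
    rintro t ⟨ht0, ht1⟩
    set A := ((1 - t : ℝ) : ℂ) • ρ + ((t * b : ℝ) : ℂ) • 1 with hA
    have h1 : (0 : ℂ) ≤ ((1 - t : ℝ) : ℂ) := by exact_mod_cast sub_nonneg.mpr ht1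
    have h2 : (0 : ℂ) < ((t * b : ℝ) : ℂ) := by exact_mod_cast mul_pos ht0 hb0
    have hApos : A.PosDef := PosDef.posSemidef_add (hρ.smul h1) (PosDef.one.smul h2)
    have hAtr : A.trace = 1 := by
      have h3 : ((t * b : ℝ) : ℂ) * Fintype.card ((Fin k → Fin 2) × (Fin c → Fin 2)) = (t : ℂ) := by
        rw [← Complex.ofReal_natCast, ← Complex.ofReal_mul, mul_assoc, hb,
          inv_mul_cancel₀ hcard.ne', mul_one]
      rw [hA, trace_add, trace_smul, trace_smul, htr, trace_one, smul_eq_mul, smul_eq_mul, h3]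
      push_cast
      ring
    have h4 := vnEntropy_depolNoise hp0 hp1 Finset.univ hApos
    have h5 := mul_le_mul_of_nonneg_left
      (vnEntropy_depolSetLin_univ hApos.posSemidef hAtr) hp0
    rw [← mul_assoc] at h5
    have h6 : depolNoise c p Finset.univ A =
        ((1 - t : ℝ) : ℂ) • depolNoise c p Finset.univ ρ + ((t * b : ℝ) : ℂ) • 1 := by
      rw [hA, map_add, map_smul, map_smul, depolNoise_one]
    rw [← h6]
    linarith
  have hlim := le_of_tendsto_of_tendsto
    ((((hcont.const_mul (1 - p)).add_const (p * k * Real.log 2)).tendsto 0).mono_left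
      nhdsWithin_le_nhds)
    ((hcontT.tendsto 0).mono_left nhdsWithin_le_nhds)
    (Filter.eventually_of_mem (Ioc_mem_nhdsGT zero_lt_one) hle)
  simpa [depolNoise_univ_apply] using hlim
end

section
/- (Quantum Shearer inequality, special case of full cover) Let ρ be a density matrix on n qubits and let F be the family of all subsets of {1,…,n} of a fixed size k ≥ 1; each index i lies in exactly t = C(n−1, k−1) elements of F. Then S(ρ) ≤ (1/t) · Σ_{F ∈ F} S(ρ|_F), where ρ|_F is the reduced density matrix on the qubits in F. -/
open Matrix
open scoped ComplexOrder

/-- The reduced density matrix `ρ|_F` of an `n`-qubit state on the qubits in `F`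
(partial trace over the complement of `F`). -/
noncomputable def reducedMat {n : ℕ} (F : Finset (Fin n))
    (ρ : Matrix (Fin n → Fin 2) (Fin n → Fin 2) ℂ) :
    Matrix ({i : Fin n // i ∈ F} → Fin 2) ({i : Fin n // i ∈ F} → Fin 2) ℂ :=
  Matrix.of fun x y =>
    ∑ z : {i : Fin n // i ∉ F} → Fin 2,
      ρ (fun i => if h : i ∈ F then x ⟨i, h⟩ else z ⟨i, h⟩)
        (fun i => if h : i ∈ F then y ⟨i, h⟩ else z ⟨i, h⟩)

open Filter Topology in
/-- Integrating the pointwise comparison of two Stieltjes-type resolvent sums yields the comparison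
of the corresponding logarithmic sums. -/
theorem sum_mul_log_le_of_sum_div_le {ι κ : Type*} [Fintype ι] [Fintype κ]
    {c x : ι → ℝ} {d y : κ → ℝ} (hx : ∀ i, 0 ≤ x i) (hy : ∀ j, 0 ≤ y j)
    (hcx : ∀ i, x i = 0 → c i = 0) (hdy : ∀ j, y j = 0 → d j = 0)
    (hcd : ∑ i, c i = ∑ j, d j)
    (h : ∀ s, 0 < s → ∑ i, c i / (x i + s) ≤ ∑ j, d j / (y j + s)) :
    ∑ j, d j * Real.log (y j) ≤ ∑ i, c i * Real.log (x i) := by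
  have hcont : ∀ a b : ℝ, 0 ≤ b → (b = 0 → a = 0) →
      ContinuousOn (fun s => a * Real.log (b + s)) (Set.Ici 0) := by
    intro a b hb hab
    by_cases hb0 : b = 0
    · simp only [hab hb0, zero_mul]; exact continuousOn_const
    · refine continuousOn_const.mul (ContinuousOn.log (by fun_prop) fun s hs => ?_)
      have : 0 < b := lt_of_le_of_ne hb (Ne.symm hb0)
      have hs' : (0 : ℝ) ≤ s := hs
      positivity
  have hderiv : ∀ a b : ℝ, 0 ≤ b → ∀ s, 0 < s →
      HasDerivAt (fun s => a * Real.log (b + s)) (a / (b + s)) s := by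
    intro a b hb s hs
    have := (((hasDerivAt_id s).const_add b).log (by simp; positivity)).const_mul a
    simpa [div_eq_mul_inv] using this
  have hlim : ∀ a b : ℝ, 0 ≤ b →
      Tendsto (fun s => a * Real.log (b + s) - a * Real.log s) atTop (𝓝 0) := by
    intro a b hb
    have h1 : Tendsto (fun s : ℝ => a * Real.log (b / s + 1)) atTop (𝓝 (a * Real.log (0 + 1))) :=
      ((((tendsto_const_nhds (x := b)).div_atTop tendsto_id).add_const 1).log
        (by norm_num)).const_mul a
    simp only [zero_add, Real.log_one, mul_zero] at h1
    refine h1.congr' ?_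
    filter_upwards [eventually_gt_atTop 0] with s hs
    rw [← mul_sub, ← Real.log_div (by positivity) (by positivity)]
    congr 2
    field_simp
  let H : ℝ → ℝ := fun s =>
    ∑ i, c i * Real.log (x i + s) - ∑ j, d j * Real.log (y j + s)
  have hanti : AntitoneOn H (Set.Ici 0) := by
    have hH : ∀ s, 0 < s →
        HasDerivAt H (∑ i, c i / (x i + s) - ∑ j, d j / (y j + s)) s := fun s hs =>
      (HasDerivAt.fun_sum fun i _ => hderiv (c i) (x i) (hx i) s hs).sub
        (HasDerivAt.fun_sum fun j _ => hderiv (d j) (y j) (hy j) s hs)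
    refine antitoneOn_of_deriv_nonpos (convex_Ici 0) ?_ ?_ ?_
    · exact (continuousOn_finsetSum _ fun i _ => hcont _ _ (hx i) (hcx i)).sub
        (continuousOn_finsetSum _ fun j _ => hcont _ _ (hy j) (hdy j))
    · intro s hs
      rw [interior_Ici] at hs
      exact (hH s hs).differentiableAt.differentiableWithinAt
    · intro s hs
      rw [interior_Ici] at hs
      rw [(hH s hs).deriv]
      linarith [h s hs]
  have hH0 : Tendsto H atTop (𝓝 0) := by
    have h1 := (tendsto_finsetSum Finset.univ fun i _ => hlim (c i) (x i) (hx i)).sub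
      (tendsto_finsetSum Finset.univ fun j _ => hlim (d j) (y j) (hy j))
    simp only [Finset.sum_const_zero, sub_zero, Finset.sum_sub_distrib, ← Finset.sum_mul,
      hcd] at h1
    refine h1.congr fun s => ?_
    simp only [H]
    ring
  have : 0 ≤ H 0 := by
    refine le_of_tendsto hH0 ?_
    filter_upwards [eventually_ge_atTop 0] with s hs
    exact hanti Set.self_mem_Ici hs hs
  simpa [H] using this

/-- **Shearer's inequality** for submodular functions and the full cover by `k`-subsets. -/
theorem shearer_of_submodular {n k : ℕ} (hk1 : 1 ≤ k) (f : Finset (Fin n) → ℝ)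
    (h0 : f ∅ = 0)
    (hf : ∀ s t i, s ⊆ t → i ∉ t → f (insert i t) + f s ≤ f (insert i s) + f t) :
    (Nat.choose (n - 1) (k - 1) : ℝ) * f Finset.univ ≤
      ∑ s ∈ Finset.univ.powersetCard k, f s := by
  let g : Fin n → ℝ := fun i => f (Finset.Iic i) - f (Finset.Iio i)
  have hins : ∀ i : Fin n, Finset.Iic i = insert i (Finset.Iio i) := fun i => by
    ext j; simp [le_iff_eq_or_lt]
  have hle : ∀ s : Finset (Fin n), ∑ i ∈ s, g i ≤ f s := by
    intro s
    induction s using Finset.induction_on_max with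
    | empty => simp [h0]
    | insert a s ha ih =>
      have := hf s (Finset.Iio a) a (fun x hx => by simpa using ha x hx) (by simp)
      rw [Finset.sum_insert fun h => lt_irrefl _ (ha a h)]
      simp only [g, hins] at ih ⊢
      linarith
  have heq : ∀ s : Finset (Fin n), IsLowerSet (s : Set (Fin n)) → f s = ∑ i ∈ s, g i := by
    intro s
    induction s using Finset.induction_on_max with
    | empty => simp [h0]
    | insert a s ha ih =>
      intro hs
      have hsa : s = Finset.Iio a := by
        ext x
        refine ⟨fun hx => by simpa using ha x hx, fun hx => ?_⟩
        have hxa : x < a := by simpa using hx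
        have := hs hxa.le (by simp)
        simp only [Finset.coe_insert, Set.mem_insert_iff, Finset.mem_coe] at this
        exact this.resolve_left hxa.ne
      rw [Finset.sum_insert fun h => lt_irrefl _ (ha a h),
        ← ih (by rw [hsa, Finset.coe_Iio]; exact isLowerSet_Iio a)]
      simp only [g, hins, ← hsa]
      ring
  have hcard : ∀ i : Fin n,
      ((Finset.univ.powersetCard k).filter (fun s : Finset (Fin n) => i ∈ s)).card =
        Nat.choose (n - 1) (k - 1) := by
    intro i
    have := Finset.card_filter_powersetCard_subset {i} (Finset.univ : Finset (Fin n)) k (by simp)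
      (by simpa using hk1)
    simpa using this
  calc (Nat.choose (n - 1) (k - 1) : ℝ) * f Finset.univ
      = ∑ i, ∑ s ∈ Finset.univ.powersetCard k, if i ∈ s then g i else 0 := by
        rw [heq _ (by simpa using isLowerSet_univ), Finset.mul_sum]
        refine Finset.sum_congr rfl fun i _ => ?_
        rw [← Finset.sum_filter, Finset.sum_const, hcard, nsmul_eq_mul]
    _ = ∑ s ∈ Finset.univ.powersetCard k, ∑ i ∈ s, g i := by
        rw [Finset.sum_comm]
        simp
    _ ≤ _ := Finset.sum_le_sum fun s _ => hle s

open scoped Kronecker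

theorem sum_roots_charpoly_mul_log {ι : Type*} [Fintype ι] [DecidableEq ι] {M : Matrix ι ι ℂ}
    (h : M.IsHermitian) :
    (M.charpoly.roots.map fun z : ℂ => z.re * Real.log z.re).sum =
      ∑ i, h.eigenvalues i * Real.log (h.eigenvalues i) := by
  rw [h.roots_charpoly_eq_eigenvalues, Multiset.map_map]
  simp

/-- Reindexing a matrix along an equivalence preserves its von Neumann entropy. -/
theorem vnEntropy_submatrix_equiv {ι κ : Type*} [Fintype ι] [DecidableEq ι] [Fintype κ]
    [DecidableEq κ] (e : κ ≃ ι) (M : Matrix ι ι ℂ) :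
    vnEntropy (M.submatrix e e) = vnEntropy M := by
  have hc : (M.submatrix e e).charpoly = M.charpoly := by
    simpa using charpoly_reindex e.symm M
  by_cases h : M.IsHermitian
  · have h' : (M.submatrix e e).IsHermitian := h.submatrix e
    rw [vnEntropy, vnEntropy, dif_pos h, dif_pos h', ← sum_roots_charpoly_mul_log h,
      ← sum_roots_charpoly_mul_log h', hc]
  · have h' : ¬ (M.submatrix e e).IsHermitian := fun h' => h (by
      simpa using h'.submatrix e.symm)
    rw [vnEntropy, vnEntropy, dif_neg h, dif_neg h']

/-- The partial trace over the left tensor factor. -/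
def traceFst {α β : Type*} [Fintype α] (M : Matrix (α × β) (α × β) ℂ) : Matrix β β ℂ :=
  Matrix.of fun x y => ∑ a, M (a, x) (a, y)

/-- The partial trace over the last of three tensor factors. -/
def traceThird {α β γ : Type*} [Fintype γ] (M : Matrix (α × β × γ) (α × β × γ) ℂ) :
    Matrix (α × β) (α × β) ℂ :=
  Matrix.of fun x y => ∑ c, M (x.1, x.2, c) (y.1, y.2, c)

theorem Matrix.PosSemidef.traceFst {α β : Type*} [Fintype α] {M : Matrix (α × β) (α × β) ℂ}
    (hM : M.PosSemidef) : (traceFst M).PosSemidef := by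
  have : _root_.traceFst M = ∑ a, M.submatrix (fun x => (a, x)) (fun x => (a, x)) := by
    ext x y; simp [_root_.traceFst, Matrix.sum_apply]
  rw [this]
  exact posSemidef_sum _ fun a _ => hM.submatrix _

theorem Matrix.PosSemidef.traceThird {α β γ : Type*} [Fintype γ]
    {M : Matrix (α × β × γ) (α × β × γ) ℂ} (hM : M.PosSemidef) :
    (traceThird M).PosSemidef := by
  have : _root_.traceThird M =
      ∑ c, M.submatrix (fun x : α × β => (x.1, x.2, c)) (fun x => (x.1, x.2, c)) := by
    ext x y; simp [_root_.traceThird, Matrix.sum_apply]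
  rw [this]
  exact posSemidef_sum _ fun a _ => hM.submatrix _

/-- The embedding `X ↦ X ⊗ 1` of the operators on the first two of three tensor factors. -/
def embedThird {α β γ : Type*} [DecidableEq γ] (X : Matrix (α × β) (α × β) ℂ) :
    Matrix (α × β × γ) (α × β × γ) ℂ :=
  (X ⊗ₖ (1 : Matrix γ γ ℂ)).submatrix (Equiv.prodAssoc α β γ).symm (Equiv.prodAssoc α β γ).symm

theorem embedThird_conjTranspose {α β γ : Type*} [DecidableEq γ]
    (X : Matrix (α × β) (α × β) ℂ) :
    embedThird (γ := γ) Xᴴ = (embedThird X)ᴴ := by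
  rw [embedThird, embedThird, conjTranspose_submatrix, conjTranspose_kronecker,
    conjTranspose_one]

theorem traceThird_one_kronecker {α β γ : Type*} [Fintype α] [Fintype γ] [DecidableEq α]
    (M : Matrix (α × β × γ) (α × β × γ) ℂ) :
    traceThird ((1 : Matrix α α ℂ) ⊗ₖ traceFst M) =
      (1 : Matrix α α ℂ) ⊗ₖ traceFst (traceThird M) := by
  ext ⟨a, b⟩ ⟨a', b'⟩
  change ∑ c, (1 : Matrix α α ℂ) a a' * ∑ a₀, M (a₀, b, c) (a₀, b', c) =
    (1 : Matrix α α ℂ) a a' * ∑ a₀, ∑ c, M (a₀, b, c) (a₀, b', c)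
  rw [← Finset.mul_sum, Finset.sum_comm]

section PartialTrace

variable {α β γ : Type*} [Fintype α] [Fintype β] [Fintype γ]

theorem embedThird_mul [DecidableEq γ] (X Y : Matrix (α × β) (α × β) ℂ) :
    embedThird (γ := γ) (X * Y) = embedThird X * embedThird Y := by
  rw [embedThird, embedThird, embedThird, submatrix_mul_equiv, ← mul_kronecker_mul, one_mul]

theorem trace_mul_embedThird [DecidableEq γ] (M : Matrix (α × β × γ) (α × β × γ) ℂ)
    (X : Matrix (α × β) (α × β) ℂ) :
    (M * embedThird X).trace = (traceThird M * X).trace := by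
  simp only [trace, diag_apply, mul_apply, embedThird, traceThird, submatrix_apply,
    Equiv.prodAssoc_symm_apply, kroneckerMap_apply, one_apply, Fintype.sum_prod_type, of_apply,
    mul_ite, mul_one, mul_zero, Finset.sum_ite_eq', Finset.mem_univ, if_true,
    Finset.sum_mul]
  refine Finset.sum_congr rfl fun a _ => Finset.sum_congr rfl fun b _ => ?_
  rw [Finset.sum_comm]
  refine Finset.sum_congr rfl fun a' _ => ?_
  rw [Finset.sum_comm]

theorem trace_mul_one_kronecker [DecidableEq α] (M : Matrix (α × β) (α × β) ℂ)
    (Z : Matrix β β ℂ) :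
    (M * ((1 : Matrix α α ℂ) ⊗ₖ Z)).trace = (traceFst M * Z).trace := by
  simp only [trace, diag_apply, mul_apply, traceFst,
    kroneckerMap_apply, one_apply, Fintype.sum_prod_type, of_apply,
    ite_mul, mul_ite, one_mul, zero_mul, mul_zero, Finset.sum_mul]
  rw [Finset.sum_comm]
  refine Finset.sum_congr rfl fun b _ => ?_
  rw [Finset.sum_comm]
  conv_rhs => rw [Finset.sum_comm]
  refine Finset.sum_congr rfl fun a _ => ?_
  rw [Finset.sum_comm]
  simp

end PartialTrace

/-- The quadratic functional whose supremum over `X` is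
`∑ i k, ‖⟪u i, v k⟫‖ ^ 2 * p i ^ 2 / (q k + s * p i)` in terms of the spectral data of `R`
and `T`. -/
noncomputable def resolventForm {m : Type*} [Fintype m] (s : ℝ) (R T X : Matrix m m ℂ) : ℝ :=
  2 * (R * X).trace.re - (T * (X * Xᴴ)).trace.re - s * (R * (Xᴴ * X)).trace.re

theorem resolventForm_embedThird {α β γ : Type*} [Fintype α] [Fintype β] [Fintype γ]
    [DecidableEq α] [DecidableEq γ] (s : ℝ) (M : Matrix (α × β × γ) (α × β × γ) ℂ)
    (X : Matrix (α × β) (α × β) ℂ) :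
    resolventForm s M ((1 : Matrix α α ℂ) ⊗ₖ traceFst M) (embedThird X) =
      resolventForm s (traceThird M) ((1 : Matrix α α ℂ) ⊗ₖ traceFst (traceThird M)) X := by
  simp only [resolventForm, ← embedThird_conjTranspose, ← embedThird_mul, trace_mul_embedThird,
    traceThird_one_kronecker]

theorem exists_unitary_diagonalization {m : Type*} [Fintype m] [DecidableEq m]
    {M : Matrix m m ℂ} (h : M.IsHermitian) :
    ∃ U : Matrix m m ℂ, Uᴴ * U = 1 ∧ U * Uᴴ = 1 ∧
      M = U * diagonal (fun i => (h.eigenvalues i : ℂ)) * Uᴴ := by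
  refine ⟨h.eigenvectorUnitary, Unitary.coe_star_mul_self _, Unitary.coe_mul_star_self _, ?_⟩
  have := h.spectral_theorem
  rwa [Unitary.conjStarAlgAut_apply] at this

section Spectral

variable {m : Type*} [Fintype m] [DecidableEq m]

theorem trace_diagonal_mul_mul_diagonal_mul (K : Matrix m m ℂ) (p d : m → ℝ) :
    (diagonal (fun i => (p i : ℂ)) * (K * (diagonal (fun k => (d k : ℂ)) * Kᴴ))).trace =
      ((∑ i, ∑ k, p i * ‖K i k‖ ^ 2 * d k : ℝ) : ℂ) := by
  simp only [trace, diag_apply, diagonal_mul, mul_apply (M := K), conjTranspose_apply]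
  push_cast
  refine Finset.sum_congr rfl fun i _ => ?_
  rw [Finset.mul_sum]
  refine Finset.sum_congr rfl fun k _ => ?_
  rw [← Complex.mul_conj']
  simp only [Complex.star_def]
  ring

theorem resolventForm_eq_sum (s : ℝ) (U V Y : Matrix m m ℂ) (hU : Uᴴ * U = 1) (hV : Vᴴ * V = 1)
    (p q : m → ℝ) :
    resolventForm s (U * diagonal (fun i => (p i : ℂ)) * Uᴴ)
        (V * diagonal (fun i => (q i : ℂ)) * Vᴴ) (V * Y * Uᴴ) =
      ∑ i, ∑ k, (2 * p i * ((Uᴴ * V) i k * Y k i).re - (q k + s * p i) * ‖Y k i‖ ^ 2) := by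
  set P := diagonal (fun i => (p i : ℂ))
  set Q := diagonal (fun i => (q i : ℂ))
  have h1 : (U * P * Uᴴ * (V * Y * Uᴴ)).trace = (P * (Uᴴ * V * Y)).trace := by
    rw [show U * P * Uᴴ * (V * Y * Uᴴ) = U * (P * Uᴴ * V * Y * Uᴴ) by simp only [Matrix.mul_assoc],
      trace_mul_comm, Matrix.mul_assoc _ Uᴴ U, hU]
    simp only [Matrix.mul_assoc, Matrix.mul_one]
  have h2 : (V * Q * Vᴴ * (V * Y * Uᴴ * (V * Y * Uᴴ)ᴴ)).trace = (Q * (Y * Yᴴ)).trace := by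
    have : V * Q * Vᴴ * (V * Y * Uᴴ * (V * Y * Uᴴ)ᴴ) = V * (Q * Y * Yᴴ * Vᴴ) := by
      simp only [conjTranspose_mul, conjTranspose_conjTranspose]
      calc _ = V * Q * (Vᴴ * V) * Y * (Uᴴ * U) * Yᴴ * Vᴴ := by simp only [Matrix.mul_assoc]
        _ = _ := by rw [hU, hV]; simp only [Matrix.mul_assoc, Matrix.mul_one]
    rw [this, trace_mul_comm, Matrix.mul_assoc _ Vᴴ V, hV, Matrix.mul_one, Matrix.mul_assoc]
  have h3 : (U * P * Uᴴ * ((V * Y * Uᴴ)ᴴ * (V * Y * Uᴴ))).trace = (P * (Yᴴ * Y)).trace := by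
    have : U * P * Uᴴ * ((V * Y * Uᴴ)ᴴ * (V * Y * Uᴴ)) = U * (P * Yᴴ * Y * Uᴴ) := by
      simp only [conjTranspose_mul, conjTranspose_conjTranspose]
      calc _ = U * P * (Uᴴ * U) * Yᴴ * (Vᴴ * V) * Y * Uᴴ := by simp only [Matrix.mul_assoc]
        _ = _ := by rw [hU, hV]; simp only [Matrix.mul_assoc, Matrix.mul_one]
    rw [this, trace_mul_comm, Matrix.mul_assoc _ Uᴴ U, hU, Matrix.mul_one, Matrix.mul_assoc]
  have h4 : (P * (Uᴴ * V * Y)).trace.re = ∑ i, ∑ k, p i * ((Uᴴ * V) i k * Y k i).re := by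
    simp only [P, trace, diag_apply, diagonal_mul, mul_apply (N := Y), Complex.re_sum,
      Complex.re_ofReal_mul, Finset.mul_sum]
  have h5 : (Q * (Y * Yᴴ)).trace.re = ∑ i, ∑ k, q k * ‖Y k i‖ ^ 2 := by
    rw [Finset.sum_comm]
    simp only [Q, trace, diag_apply, diagonal_mul, mul_apply (N := Yᴴ), Complex.re_sum,
      Complex.re_ofReal_mul, Finset.mul_sum, conjTranspose_apply, Complex.star_def,
      Complex.mul_conj', ← Complex.ofReal_pow, Complex.ofReal_re]
  have h6 : (P * (Yᴴ * Y)).trace.re = ∑ i, ∑ k, p i * ‖Y k i‖ ^ 2 := by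
    simp only [P, trace, diag_apply, diagonal_mul, mul_apply (N := Y), Complex.re_sum,
      Complex.re_ofReal_mul, Finset.mul_sum, conjTranspose_apply, Complex.star_def,
      Complex.conj_mul', ← Complex.ofReal_pow, Complex.ofReal_re]
  rw [resolventForm, h1, h2, h3, h4, h5, h6]
  simp only [Finset.mul_sum, ← Finset.sum_sub_distrib]
  refine Finset.sum_congr rfl fun i _ => Finset.sum_congr rfl fun k _ => ?_
  ring

theorem two_mul_re_sub_le {p q s : ℝ} (hp : 0 ≤ p) (hq : 0 ≤ q) (hs : 0 < s) (z w : ℂ) :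
    2 * p * (z * w).re - (q + s * p) * ‖w‖ ^ 2 ≤ p * ‖z‖ ^ 2 / (q / p + s) := by
  rcases hp.eq_or_lt with rfl | hp
  · simp only [mul_zero, zero_mul, add_zero, zero_div, zero_sub, neg_nonpos]
    positivity
  · have hD : 0 < q + s * p := by positivity
    have h1 : (z * w).re ≤ ‖z‖ * ‖w‖ := by
      rw [← norm_mul]; exact Complex.re_le_norm _
    have h2 : p * ‖z‖ ^ 2 / (q / p + s) = (p * ‖z‖) ^ 2 / (q + s * p) := by
      field_simp
    rw [h2, le_div_iff₀ hD]
    nlinarith [sq_nonneg ((q + s * p) * ‖w‖ - p * ‖z‖), mul_le_mul_of_nonneg_left h1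
      (mul_nonneg hp.le hD.le)]

theorem two_mul_re_sub_eq {p q s : ℝ} (hp : 0 ≤ p) (hq : 0 ≤ q) (hs : 0 < s) (z : ℂ) :
    2 * p * (z * ((p / (q + s * p) : ℝ) * star z)).re -
      (q + s * p) * ‖((p / (q + s * p) : ℝ) * star z : ℂ)‖ ^ 2 = p * ‖z‖ ^ 2 / (q / p + s) := by
  rcases hp.eq_or_lt with rfl | hp
  · simp
  · have hD : 0 < q + s * p := by positivity
    have h2 : p * ‖z‖ ^ 2 / (q / p + s) = (p * ‖z‖) ^ 2 / (q + s * p) := by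
      field_simp
    rw [h2, mul_left_comm, Complex.re_ofReal_mul, Complex.star_def, Complex.mul_conj',
      ← Complex.ofReal_pow, Complex.ofReal_re, norm_mul, Complex.norm_real, RCLike.norm_conj,
      mul_pow, Real.norm_eq_abs, sq_abs]
    field_simp
    ring

end Spectral

section ConditionalEntropy

variable {α β : Type*} [Fintype α] [Fintype β] [DecidableEq α] [DecidableEq β]

/-- The conditional entropy of a bipartite state is a finite logarithmic sum whose resolvent sums
are the maxima of `resolventForm`. -/
theorem exists_resolvent_representation {R : Matrix (α × β) (α × β) ℂ} (hR : R.PosSemidef) :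
    ∃ c x : (α × β) × (α × β) → ℝ, (∀ i, 0 ≤ x i) ∧ (∀ i, x i = 0 → c i = 0) ∧
      ∑ i, c i = R.trace.re ∧
      ∑ i, c i * Real.log (x i) = vnEntropy R - vnEntropy (traceFst R) ∧
      ∀ s, 0 < s →
        IsGreatest (Set.range (resolventForm s R ((1 : Matrix α α ℂ) ⊗ₖ traceFst R)))
          (∑ i, c i / (x i + s)) := by
  have hT := hR.traceFst
  set p := hR.1.eigenvalues
  set q := hT.1.eigenvalues
  have hp : ∀ i, 0 ≤ p i := hR.eigenvalues_nonneg
  have hq : ∀ j, 0 ≤ q j := hT.eigenvalues_nonneg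
  obtain ⟨U, hU, hU', (hRU : R = U * diagonal (fun i => (p i : ℂ)) * Uᴴ)⟩ :=
    exists_unitary_diagonalization hR.1
  obtain ⟨v, hv, hv', (hTv : traceFst R = v * diagonal (fun j => (q j : ℂ)) * vᴴ)⟩ :=
    exists_unitary_diagonalization hT.1
  set V : Matrix (α × β) (α × β) ℂ := 1 ⊗ₖ v with hVdef
  have hVH : Vᴴ = 1 ⊗ₖ vᴴ := by rw [hVdef, conjTranspose_kronecker, conjTranspose_one]
  have hV : Vᴴ * V = 1 := by rw [hVH, ← mul_kronecker_mul, hv, one_mul, one_kronecker_one]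
  have hV' : V * Vᴴ = 1 := by rw [hVH, ← mul_kronecker_mul, hv', one_mul, one_kronecker_one]
  have hVd : ∀ d : β → ℝ, (1 : Matrix α α ℂ) ⊗ₖ (v * diagonal (fun j => (d j : ℂ)) * vᴴ) =
      V * diagonal (fun k => ((fun k : α × β => d k.2) k : ℂ)) * Vᴴ := by
    intro d
    have : diagonal (fun k : α × β => (d k.2 : ℂ)) =
        (1 : Matrix α α ℂ) ⊗ₖ diagonal (fun j => (d j : ℂ)) := by
      rw [← diagonal_one, diagonal_kronecker_diagonal]
      simp
    rw [this, hVH, ← mul_kronecker_mul, ← mul_kronecker_mul, one_mul, one_mul]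
  set K := Uᴴ * V with hK
  have hKH : Kᴴ = Vᴴ * U := by rw [hK, conjTranspose_mul, conjTranspose_conjTranspose]
  have hmarg : ∀ d : β → ℝ, ∑ i, ∑ k, p i * ‖K i k‖ ^ 2 * d k.2 = ∑ j, q j * d j := by
    intro d
    have h1 := trace_mul_one_kronecker R (v * diagonal (fun j => (d j : ℂ)) * vᴴ)
    have h2 : (R * (V * diagonal (fun k => ((fun k : α × β => d k.2) k : ℂ)) * Vᴴ)).trace =
        ((∑ i, ∑ k, p i * ‖K i k‖ ^ 2 * d k.2 : ℝ) : ℂ) := by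
      rw [← trace_diagonal_mul_mul_diagonal_mul K p, hRU, Matrix.mul_assoc U, Matrix.mul_assoc U,
        trace_mul_comm, hKH, hK]
      simp only [Matrix.mul_assoc]
    have h3 : (traceFst R * (v * diagonal (fun j => (d j : ℂ)) * vᴴ)).trace =
        ((∑ j, q j * d j : ℝ) : ℂ) := by
      rw [hTv, Matrix.mul_assoc v, Matrix.mul_assoc v, trace_mul_comm]
      simp only [Matrix.mul_assoc, hv, Matrix.mul_one]
      rw [← Matrix.mul_assoc vᴴ, hv, Matrix.one_mul, diagonal_mul_diagonal, trace_diagonal]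
      push_cast
      rfl
    rw [hVd, h2, h3] at h1
    exact_mod_cast h1
  have hrow : ∀ i, ∑ k, ‖K i k‖ ^ 2 = 1 := by
    intro i
    have h1 : (K * Kᴴ) i i = 1 := by
      rw [hKH, hK, Matrix.mul_assoc, ← Matrix.mul_assoc V, hV', Matrix.one_mul, hU, one_apply_eq]
    simp only [mul_apply (N := Kᴴ), conjTranspose_apply, Complex.star_def, Complex.mul_conj'] at h1
    exact_mod_cast h1
  have hzero : ∀ i k, q k.2 = 0 → p i * ‖K i k‖ ^ 2 = 0 := by
    intro i k hk
    have h1 := hmarg (Pi.single k.2 1)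
    simp only [Pi.single_apply, mul_ite, mul_one, mul_zero, Finset.sum_ite_eq', Finset.mem_univ,
      if_true, hk] at h1
    have h0 : ∀ i (l : α × β), 0 ≤ if l.2 = k.2 then p i * ‖K i l‖ ^ 2 else 0 := by
      intro i l
      split_ifs
      · exact mul_nonneg (hp i) (by positivity)
      · exact le_rfl
    rw [Finset.sum_eq_zero_iff_of_nonneg fun i _ => Finset.sum_nonneg fun l _ => h0 i l] at h1
    have h2 := h1 i (Finset.mem_univ _)
    rw [Finset.sum_eq_zero_iff_of_nonneg fun l _ => h0 i l] at h2
    simpa using h2 k (Finset.mem_univ _)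
  refine ⟨fun z => p z.1 * ‖K z.1 z.2‖ ^ 2, fun z => q z.2.2 / p z.1,
    fun z => div_nonneg (hq _) (hp _), ?_, ?_, ?_, ?_⟩
  · rintro ⟨i, k⟩ h
    rcases div_eq_zero_iff.1 h with h | h
    · exact hzero i k h
    · exact mul_eq_zero_of_left h _
  · simp only [Fintype.sum_prod_type (α₁ := α × β), ← Finset.mul_sum, hrow, mul_one]
    rw [hR.1.trace_eq_sum_eigenvalues]
    simp [p]
  · have hterm : ∀ i k, p i * ‖K i k‖ ^ 2 * Real.log (q k.2 / p i) =
        p i * ‖K i k‖ ^ 2 * Real.log (q k.2) - p i * Real.log (p i) * ‖K i k‖ ^ 2 := by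
      intro i k
      by_cases hpi : p i = 0
      · simp [hpi]
      by_cases hqk : q k.2 = 0
      · have := (mul_eq_zero.1 (hzero i k hqk)).resolve_left hpi
        simp [this]
      · rw [Real.log_div hqk hpi]
        ring
    rw [Fintype.sum_prod_type (α₁ := α × β)]
    simp only [hterm, Finset.sum_sub_distrib, hmarg (fun j => Real.log (q j)), ← Finset.mul_sum,
      hrow, mul_one]
    rw [vnEntropy, vnEntropy, dif_pos hR.1, dif_pos hT.1]
    ring
  · intro s hs
    have hform : ∀ Y, resolventForm s R ((1 : Matrix α α ℂ) ⊗ₖ traceFst R) (V * Y * Uᴴ) =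
        ∑ i, ∑ k, (2 * p i * (K i k * Y k i).re - (q k.2 + s * p i) * ‖Y k i‖ ^ 2) := by
      intro Y
      rw [← resolventForm_eq_sum s U V Y hU hV p (fun k => q k.2), ← hVd, ← hTv, ← hRU]
    rw [Fintype.sum_prod_type (α₁ := α × β)]
    refine ⟨⟨V * Matrix.of (fun k i => ((p i / (q k.2 + s * p i) : ℝ) * star (K i k) : ℂ)) * Uᴴ,
      ?_⟩, ?_⟩
    · rw [hform]
      exact Finset.sum_congr rfl fun i _ => Finset.sum_congr rfl fun k _ =>
        two_mul_re_sub_eq (hp i) (hq k.2) hs (K i k)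
    · rintro _ ⟨X, rfl⟩
      have hX : X = V * (Vᴴ * X * U) * Uᴴ := by
        calc X = (V * Vᴴ) * X * (U * Uᴴ) := by rw [hV', hU', Matrix.one_mul, Matrix.mul_one]
          _ = _ := by simp only [Matrix.mul_assoc]
      rw [hX, hform]
      exact Finset.sum_le_sum fun i _ => Finset.sum_le_sum fun k _ =>
        two_mul_re_sub_le (hp i) (hq k.2) hs (K i k) _

/-- **Strong subadditivity** of the von Neumann entropy. -/
theorem vnEntropy_strong_subadditivity_s2 {γ : Type*} [Fintype γ] [DecidableEq γ]
    {M : Matrix (α × β × γ) (α × β × γ) ℂ} (hM : M.PosSemidef) :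
    vnEntropy M + vnEntropy (traceFst (traceThird M)) ≤
      vnEntropy (traceThird M) + vnEntropy (traceFst M) := by
  obtain ⟨c, x, hx, hcx, hc, hcl, hcg⟩ := exists_resolvent_representation hM.traceThird
  obtain ⟨d, y, hy, hdy, hd, hdl, hdg⟩ := exists_resolvent_representation hM
  have htr : (traceThird M).trace = M.trace := by
    simp [traceThird, trace, Fintype.sum_prod_type]
  have := sum_mul_log_le_of_sum_div_le hx hy hcx hdy (by rw [hc, hd, htr]) fun s hs => by
    obtain ⟨X, hX⟩ := (hcg s hs).1
    rw [← hX, ← resolventForm_embedThird]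
    exact (hdg s hs).2 ⟨_, rfl⟩
  linarith

end ConditionalEntropy

section Qubits

variable {n : ℕ}

/-- The configuration on `D` that agrees with `x` on `A` and with `y` on `B`. -/
def glue (A B D : Finset (Fin n)) (x : {i : Fin n // i ∈ A} → Fin 2)
    (y : {i : Fin n // i ∈ B} → Fin 2) : {i : Fin n // i ∈ D} → Fin 2 :=
  fun i => if h : i.1 ∈ A then x ⟨i, h⟩ else if h : i.1 ∈ B then y ⟨i, h⟩ else 0

theorem glue_comm {A B D : Finset (Fin n)} (hAB : Disjoint A B)
    (x : {i : Fin n // i ∈ A} → Fin 2) (y : {i : Fin n // i ∈ B} → Fin 2) :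
    glue A B D x y = glue B A D y x := by
  ext i
  by_cases hA : i.1 ∈ A
  · simp [glue, hA, Finset.disjoint_left.1 hAB hA]
  · simp [glue, hA]

theorem glue_assoc {A B C AB BC D : Finset (Fin n)} (hAB : ∀ i, i ∈ AB ↔ i ∈ A ∨ i ∈ B)
    (hBC : ∀ i, i ∈ BC ↔ i ∈ B ∨ i ∈ C) (x : {i : Fin n // i ∈ A} → Fin 2)
    (y : {i : Fin n // i ∈ B} → Fin 2) (z : {i : Fin n // i ∈ C} → Fin 2) :
    glue A BC D x (glue B C BC y z) = glue AB C D (glue A B AB x y) z := by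
  ext i
  by_cases hA : i.1 ∈ A <;> by_cases hB : i.1 ∈ B <;> by_cases hC : i.1 ∈ C <;>
    simp [glue, hA, hB, hC, hAB, hBC]

/-- Gluing identifies pairs of configurations on `A` and `B` with configurations on their disjoint
union `D`. -/
def glueEquiv {A B D : Finset (Fin n)} (hAB : Disjoint A B) (hD : ∀ i, i ∈ D ↔ i ∈ A ∨ i ∈ B) :
    ({i : Fin n // i ∈ A} → Fin 2) × ({i : Fin n // i ∈ B} → Fin 2) ≃
      ({i : Fin n // i ∈ D} → Fin 2) where
  toFun p := glue A B D p.1 p.2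
  invFun w := (fun i => w ⟨i, (hD i).2 (Or.inl i.2)⟩, fun i => w ⟨i, (hD i).2 (Or.inr i.2)⟩)
  left_inv p := by
    ext i
    · simp [glue, i.2]
    · simp [glue, i.2, Finset.disjoint_right.1 hAB i.2]
  right_inv w := by
    ext i
    by_cases hA : i.1 ∈ A
    · simp [glue, hA]
    · simp [glue, hA, ((hD i).1 i.2).resolve_left hA]

/-- Configurations off `A` are pairs of a configuration on `B` and one off the disjoint union `D`
of `A` and `B`. -/
def complGlueEquiv {A B D : Finset (Fin n)} (hAB : Disjoint A B)
    (hD : ∀ i, i ∈ D ↔ i ∈ A ∨ i ∈ B) :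
    ({i : Fin n // i ∈ B} → Fin 2) × ({i : Fin n // i ∉ D} → Fin 2) ≃
      ({i : Fin n // i ∉ A} → Fin 2) where
  toFun p i := if h : i.1 ∈ B then p.1 ⟨i, h⟩ else
    p.2 ⟨i, fun hi => ((hD i).1 hi).elim i.2 h⟩
  invFun w := (fun i => w ⟨i, Finset.disjoint_right.1 hAB i.2⟩,
    fun i => w ⟨i, fun h => i.2 ((hD i).2 (Or.inl h))⟩)
  left_inv p := by
    ext i
    · simp [i.2]
    · have hB : i.1 ∉ B := fun h => i.2 ((hD i).2 (Or.inr h))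
      simp [hB]
  right_inv w := by
    ext i
    by_cases hB : i.1 ∈ B <;> simp [hB]

theorem reducedMat_eq_sum_glue {A B D : Finset (Fin n)} (hAB : Disjoint A B)
    (hD : ∀ i, i ∈ D ↔ i ∈ A ∨ i ∈ B) (ρ : Matrix (Fin n → Fin 2) (Fin n → Fin 2) ℂ)
    (x y : {i : Fin n // i ∈ A} → Fin 2) :
    ∑ b, reducedMat D ρ (glue A B D x b) (glue A B D y b) = reducedMat A ρ x y := by
  simp only [reducedMat, of_apply]
  rw [← Fintype.sum_prod_type']
  refine Fintype.sum_equiv (complGlueEquiv hAB hD) _ _ fun p => ?_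
  have key : ∀ x : {i : Fin n // i ∈ A} → Fin 2,
      (fun i => if h : i ∈ D then glue A B D x p.1 ⟨i, h⟩ else p.2 ⟨i, h⟩) =
        fun i => if h : i ∈ A then x ⟨i, h⟩ else complGlueEquiv hAB hD p ⟨i, h⟩ := by
    intro x
    ext i
    by_cases hA : i ∈ A <;> by_cases hB : i ∈ B <;>
      simp [glue, complGlueEquiv, hD, hA, hB]
  rw [key, key]

theorem traceFst_reducedMat {A B D : Finset (Fin n)} (hAB : Disjoint A B)
    (hD : ∀ i, i ∈ D ↔ i ∈ A ∨ i ∈ B) (ρ : Matrix (Fin n → Fin 2) (Fin n → Fin 2) ℂ) :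
    traceFst ((reducedMat D ρ).submatrix (glueEquiv hAB hD) (glueEquiv hAB hD)) =
      reducedMat B ρ := by
  ext x y
  rw [← reducedMat_eq_sum_glue hAB.symm (fun i => (hD i).trans or_comm)]
  simp only [traceFst, of_apply, submatrix_apply, glueEquiv, Equiv.coe_fn_mk, glue_comm hAB]

theorem reducedMat_posSemidef (F : Finset (Fin n))
    {ρ : Matrix (Fin n → Fin 2) (Fin n → Fin 2) ℂ} (hρ : ρ.PosSemidef) :
    (reducedMat F ρ).PosSemidef := by
  have : reducedMat F ρ = ∑ z : {i : Fin n // i ∉ F} → Fin 2,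
      ρ.submatrix (fun (x : {i : Fin n // i ∈ F} → Fin 2) i =>
          if h : i ∈ F then x ⟨i, h⟩ else z ⟨i, h⟩)
        (fun x i => if h : i ∈ F then x ⟨i, h⟩ else z ⟨i, h⟩) := by
    ext x y
    simp [reducedMat, Matrix.sum_apply]
  rw [this]
  exact posSemidef_sum _ fun z _ => hρ.submatrix _

theorem vnEntropy_reducedMat_submodular {ρ : Matrix (Fin n → Fin 2) (Fin n → Fin 2) ℂ}
    (hρ : ρ.PosSemidef) (s t : Finset (Fin n)) (i : Fin n) (hst : s ⊆ t) (hi : i ∉ t) :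
    vnEntropy (reducedMat (insert i t) ρ) + vnEntropy (reducedMat s ρ) ≤
      vnEntropy (reducedMat (insert i s) ρ) + vnEntropy (reducedMat t ρ) := by
  have hit : Disjoint {i} t := by simpa using hi
  have his : Disjoint {i} s := hit.mono_right hst
  have hts : Disjoint s (t \ s) := Finset.disjoint_sdiff
  have hist : Disjoint (insert i s) (t \ s) := by simp [hi, hts]
  have hit' : ∀ j, j ∈ insert i t ↔ j ∈ ({i} : Finset (Fin n)) ∨ j ∈ t := by simp
  have his' : ∀ j, j ∈ insert i s ↔ j ∈ ({i} : Finset (Fin n)) ∨ j ∈ s := by simp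
  have hts' : ∀ j, j ∈ t ↔ j ∈ s ∨ j ∈ t \ s := fun j => by
    rw [← Finset.mem_union, Finset.union_sdiff_of_subset hst]
  have hist' : ∀ j, j ∈ insert i t ↔ j ∈ insert i s ∨ j ∈ t \ s := fun j => by
    rw [hit', his', hts', or_assoc]
  let e := ((Equiv.refl _).prodCongr (glueEquiv hts hts')).trans (glueEquiv hit hit')
  have hfst : traceFst ((reducedMat (insert i t) ρ).submatrix e e) =
      (reducedMat t ρ).submatrix (glueEquiv hts hts') (glueEquiv hts hts') := by
    rw [← traceFst_reducedMat hit hit' ρ]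
    rfl
  have hthird : traceThird ((reducedMat (insert i t) ρ).submatrix e e) =
      (reducedMat (insert i s) ρ).submatrix (glueEquiv his his') (glueEquiv his his') := by
    ext x y
    simp only [submatrix_apply]
    rw [← reducedMat_eq_sum_glue hist hist']
    simp only [traceThird, of_apply, submatrix_apply, e, glueEquiv, Equiv.trans_apply,
      Equiv.prodCongr_apply, Prod.map, Equiv.refl_apply, Equiv.coe_fn_mk, glue_assoc his' hts']
  have := vnEntropy_strong_subadditivity_s2 ((reducedMat_posSemidef (insert i t) hρ).submatrix e)
  rwa [hfst, hthird, traceFst_reducedMat, vnEntropy_submatrix_equiv, vnEntropy_submatrix_equiv,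
    vnEntropy_submatrix_equiv] at this

theorem vnEntropy_reducedMat_univ (ρ : Matrix (Fin n → Fin 2) (Fin n → Fin 2) ℂ) :
    vnEntropy (reducedMat Finset.univ ρ) = vnEntropy ρ := by
  let e : ({i : Fin n // i ∈ Finset.univ} → Fin 2) ≃ (Fin n → Fin 2) :=
    Equiv.arrowCongr (Equiv.subtypeUnivEquiv Finset.mem_univ) (Equiv.refl _)
  rw [← vnEntropy_submatrix_equiv e ρ]
  congr 1
  ext x y
  have : IsEmpty {i : Fin n // i ∉ Finset.univ} := ⟨fun i => i.2 (Finset.mem_univ _)⟩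
  simp only [reducedMat, of_apply, Finset.mem_univ, dite_true, submatrix_apply,
    Fintype.sum_unique]
  rfl

theorem vnEntropy_reducedMat_empty {ρ : Matrix (Fin n → Fin 2) (Fin n → Fin 2) ℂ}
    (hρ : ρ.PosSemidef) (htr : ρ.trace = 1) : vnEntropy (reducedMat ∅ ρ) = 0 := by
  have h := (reducedMat_posSemidef ∅ hρ).1
  have : IsEmpty {i : Fin n // i ∈ (∅ : Finset (Fin n))} := ⟨fun i => Finset.notMem_empty _ i.2⟩
  have htr' : (reducedMat ∅ ρ).trace = 1 := by
    rw [← htr]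
    simp only [trace, diag_apply, Fintype.sum_unique, reducedMat, of_apply, Finset.notMem_empty,
      dite_false]
    exact Fintype.sum_equiv (Equiv.arrowCongr (Equiv.subtypeUnivEquiv Finset.notMem_empty)
      (Equiv.refl _)) _ _ fun z => rfl
  have h1 : ∀ x, h.eigenvalues x = 1 := fun x => by
    rw [h.trace_eq_sum_eigenvalues, Fintype.sum_subsingleton _ x] at htr'
    simpa using congrArg Complex.re htr'
  simp [vnEntropy, dif_pos h, h1]

end Qubits

/-- quantum Shearer inequality, full cover by all `k`-subsets:
`S(ρ) ≤ (1/t) Σ_{|F| = k} S(ρ|_F)` with `t = C(n−1, k−1)`. -/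
theorem quantum_shearer_full_cover (n k : ℕ) (hk1 : 1 ≤ k) (hkn : k ≤ n)
    (ρ : Matrix (Fin n → Fin 2) (Fin n → Fin 2) ℂ)
    (hρ : ρ.PosSemidef) (htr : ρ.trace = 1) :
    vnEntropy ρ ≤
      (1 / (Nat.choose (n - 1) (k - 1) : ℝ)) *
        ∑ F ∈ Finset.univ.powersetCard k, vnEntropy (reducedMat F ρ) := by
  have hpos : (0 : ℝ) < (Nat.choose (n - 1) (k - 1) : ℝ) := by
    exact_mod_cast Nat.choose_pos (Nat.sub_le_sub_right hkn 1)
  have h := shearer_of_submodular hk1 (fun F => vnEntropy (reducedMat F ρ))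
    (vnEntropy_reducedMat_empty hρ htr) (vnEntropy_reducedMat_submodular hρ)
  rw [vnEntropy_reducedMat_univ] at h
  rw [one_div, ← div_eq_inv_mul, le_div_iff₀' hpos]
  exact h
end
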